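/- Let k ≥ 3 with k ∉ {4,5}. For all sufficiently large n, if G is an n-vertex W_{2k+1}-free simple graph attaining the maximum spectral radius among all n-vertex W_{2k+1}-free graphs, then there is a partition V(G) = L ⊔ R with |L| = n/2 + s and |R| = n/2 − s for some s with |s| ≤ 1, such that every vertex of L is adjacent to every vertex of R, the induced subgraph G[L] belongs to 𝒰_{k,|L|} (it is (k−1)-regular or nearly (k−1)-regular and contains no path on 2k−1 vertices), and the induced subgraph G[R] contains exactly one edge. -/

import Mathlib

/-- The wheel graph on `t` vertices: vertex `0` joined to every vertex of the
cycle `1, 2, …, t-1` (with `t-1` adjacent to `1`). -/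
def wheelGraph (t : ℕ) : SimpleGraph (Fin t) where
  Adj a b := a ≠ b ∧ (a.val = 0 ∨ b.val = 0 ∨ a.val + 1 = b.val ∨ b.val + 1 = a.val ∨
      (a.val = 1 ∧ b.val = t - 1) ∨ (b.val = 1 ∧ a.val = t - 1))
  symm := by
    constructor
    intro a b h
    exact ⟨h.1.symm, by tauto⟩
  loopless := by
    constructor
    intro a h
    exact h.1 rfl

/-- `G` contains a copy of `F`, i.e. a subgraph isomorphic to `F`. -/
def ContainsCopy {α β : Type*} (F : SimpleGraph α) (G : SimpleGraph β) : Prop :=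
  ∃ f : α ↪ β, ∀ a b, F.Adj a b → G.Adj (f a) (f b)

/-- `G` is `W_t`-free: it contains no subgraph isomorphic to the wheel on `t` vertices. -/
def WheelFree (t : ℕ) {n : ℕ} (G : SimpleGraph (Fin n)) : Prop :=
  ¬ ContainsCopy (wheelGraph t) G

/-- The spectral radius of `G`: the largest eigenvalue of its adjacency matrix. -/
noncomputable def lam1 {n : ℕ} (G : SimpleGraph (Fin n)) : ℝ := by
  classical
  exact sSup {μ : ℝ | Module.End.HasEigenvalue (Matrix.toLin' (G.adjMatrix ℝ)) μ}

/-- The number of edges of a graph on a finite vertex type. -/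
noncomputable def edgeCount {V : Type*} [Fintype V] (G : SimpleGraph V) : ℕ := by
  classical
  exact G.edgeFinset.card

/-- The degree of a vertex. -/
noncomputable def deg {n : ℕ} (G : SimpleGraph (Fin n)) (v : Fin n) : ℕ := by
  classical
  exact G.degree v

/-- The number of neighbours of `v` inside the set `A`. -/
noncomputable def degIn {n : ℕ} (G : SimpleGraph (Fin n)) (A : Finset (Fin n)) (v : Fin n) : ℕ := by
  classical
  exact (A.filter fun u => G.Adj v u).card

/-- The number of edges of `G` with one endpoint in `S` and the other outside `S`. -/
noncomputable def cutCount {n : ℕ} (G : SimpleGraph (Fin n)) (S : Finset (Fin n)) : ℕ := by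
  classical
  exact ((Finset.univ : Finset (Fin n × Fin n)).filter
    fun p => G.Adj p.1 p.2 ∧ p.1 ∈ S ∧ p.2 ∉ S).card

/-- `(S, T)` is a maximum cut of `G`. -/
def IsMaxCut {n : ℕ} (G : SimpleGraph (Fin n)) (S T : Finset (Fin n)) : Prop :=
  T = Sᶜ ∧ ∀ S' : Finset (Fin n), cutCount G S' ≤ cutCount G S

/-- `G` attains the maximum spectral radius among all `n`-vertex `W_t`-free graphs. -/
def IsSpexWheel (t : ℕ) {n : ℕ} (G : SimpleGraph (Fin n)) : Prop :=
  WheelFree t G ∧ ∀ H : SimpleGraph (Fin n), WheelFree t H → lam1 H ≤ lam1 G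

/-- `G` attains the maximum number of edges among all `n`-vertex `W_t`-free graphs. -/
def IsExWheel (t : ℕ) {n : ℕ} (G : SimpleGraph (Fin n)) : Prop :=
  WheelFree t G ∧ ∀ H : SimpleGraph (Fin n), WheelFree t H → edgeCount H ≤ edgeCount G

/-!
Let `x` be a Perron vector of an extremal graph `G`, with maximum entry `1` at `u`. The
neighbourhood of `u` contains no `K_{k,k}`, so by Kővári–Sós–Turán it spans few edges, and
`lam1 G ^ 2 = lam1 G ^ 2 * x u` exceeds the number of edges leaving it by at most `o(n ^ 2)`. Hence
a maximum cut of `G` is nearly a balanced complete bipartite graph. Replacing the neighbourhood of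
a single vertex `v` by a set whose bounded subsets have many common neighbours creates no wheel,
so by extremality it cannot increase the Rayleigh quotient of `x`. This bounds `x v` from below,
and then shows that `v` misses at most as many vertices across the cut as it has neighbours on its
own side, where it has fewer than `k`.

Joining disjoint copies of `K_k` and `K_{k-1,k-1}` to an independent set with one added edge gives,
by maximality, `lam1 G ^ 2 - (k - 1) * lam1 G ≥ n ^ 2 / 4 + 3 / 4`. Comparing this with the product
of the average eigenvalue equations of the two sides `A` and `B` forces the degrees inside `A` and
`B` to add up to about `k - 1` on average. If both sides contained many disjoint edges, wheels
alternating between the neighbours of a vertex and paths on the other side would push these degrees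
below that value, unless `k` is `4` or `5`. So one side, say `B`, spans boundedly many edges, and
some vertex of `A` is a hub which allows only a single edge in `B`. That edge contributes at most
`2` to the eigenvalue identity, which leaves no room for a missing edge between the sides, a second
unit of missing degree in `A`, or a part whose size differs from `n / 2` by more than `1`.
-/

section Spectral

open scoped Classical MatrixOrder
open Finset Matrix

theorem posSemidef_smul_one_sub_of_spectrum_le {ι : Type*} [Fintype ι] [DecidableEq ι]
    {A : Matrix ι ι ℝ} (hA : A.IsHermitian) {c : ℝ} (hc : ∀ μ ∈ spectrum ℝ A, μ ≤ c) :
    (c • 1 - A).PosSemidef := by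
  rw [← Matrix.le_iff, ← Algebra.algebraMap_eq_smul_one]
  exact le_algebraMap_of_spectrum_le hc hA.isSelfAdjoint

variable {n : ℕ} {G : SimpleGraph (Fin n)}

theorem le_lam1_of_mem_spectrum {μ : ℝ} (hμ : μ ∈ spectrum ℝ (G.adjMatrix ℝ)) : μ ≤ lam1 G := by
  rw [← spectrum_toLin', ← Module.End.hasEigenvalue_iff_mem_spectrum] at hμ
  exact le_csSup (Module.End.finite_hasEigenvalue _).bddAbove hμ

theorem adjMatrix_mulVec_eq_sum_neighborFinset (y : Fin n → ℝ) (v : Fin n) :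
    (G.adjMatrix ℝ *ᵥ y) v = ∑ w ∈ G.neighborFinset v, y w :=
  G.adjMatrix_mulVec_apply v y

theorem dotProduct_smul_one_sub_adjMatrix_mulVec (c : ℝ) (y : Fin n → ℝ) :
    star y ⬝ᵥ ((c • 1 - G.adjMatrix ℝ) *ᵥ y) =
      c * ∑ v, y v ^ 2 - ∑ v, y v * ∑ w ∈ G.neighborFinset v, y w := by
  rw [sub_mulVec, smul_mulVec, one_mulVec, dotProduct_sub, dotProduct_smul]
  simp only [dotProduct, star_trivial, smul_eq_mul, adjMatrix_mulVec_eq_sum_neighborFinset, sq]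

theorem posSemidef_smul_one_sub_adjMatrix {c : ℝ} (hc : lam1 G ≤ c) :
    (c • 1 - G.adjMatrix ℝ).PosSemidef :=
  posSemidef_smul_one_sub_of_spectrum_le (G.isHermitian_adjMatrix ℝ)
    fun _ hμ ↦ (le_lam1_of_mem_spectrum hμ).trans hc

theorem sum_mul_sum_neighborFinset_le (G : SimpleGraph (Fin n)) (y : Fin n → ℝ) :
    ∑ v, y v * ∑ w ∈ G.neighborFinset v, y w ≤ lam1 G * ∑ v, y v ^ 2 := by
  have h := (posSemidef_smul_one_sub_adjMatrix (le_refl (lam1 G))).dotProduct_mulVec_nonneg y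
  rwa [dotProduct_smul_one_sub_adjMatrix_mulVec, sub_nonneg] at h

theorem sum_neighborFinset_eq_of_mul_sum_sq_le {c : ℝ} (hc : lam1 G ≤ c) {y : Fin n → ℝ}
    (hy : c * ∑ v, y v ^ 2 ≤ ∑ v, y v * ∑ w ∈ G.neighborFinset v, y w) (v : Fin n) :
    ∑ w ∈ G.neighborFinset v, y w = c * y v := by
  have hpsd := posSemidef_smul_one_sub_adjMatrix hc
  have hzero : star y ⬝ᵥ ((c • 1 - G.adjMatrix ℝ) *ᵥ y) = 0 := by
    refine le_antisymm ?_ (hpsd.dotProduct_mulVec_nonneg y)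
    rwa [dotProduct_smul_one_sub_adjMatrix_mulVec, sub_nonpos]
  have hker := congrFun ((hpsd.dotProduct_mulVec_zero_iff y).mp hzero) v
  simp only [sub_mulVec, smul_mulVec, one_mulVec, Pi.sub_apply, Pi.smul_apply, smul_eq_mul,
    adjMatrix_mulVec_eq_sum_neighborFinset, Pi.zero_apply] at hker
  linarith

theorem hasEigenvalue_lam1 (hn : 0 < n) (G : SimpleGraph (Fin n)) :
    Module.End.HasEigenvalue (toLin' (G.adjMatrix ℝ)) (lam1 G) := by
  have hne : {μ : ℝ | Module.End.HasEigenvalue (toLin' (G.adjMatrix ℝ)) μ}.Nonempty := by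
    refine ⟨(G.isHermitian_adjMatrix ℝ).eigenvalues ⟨0, hn⟩, ?_⟩
    rw [Set.mem_ofPred_eq, Module.End.hasEigenvalue_iff_mem_spectrum, spectrum_toLin']
    exact (G.isHermitian_adjMatrix ℝ).eigenvalues_mem_spectrum_real _
  exact hne.csSup_mem (Module.End.finite_hasEigenvalue _)

/-- A Perron vector of `G`: a nonnegative eigenvector for the spectral radius, normalized to have
maximum entry one. -/
structure IsPerronVector (G : SimpleGraph (Fin n)) (x : Fin n → ℝ) : Prop where
  nonneg : ∀ v, 0 ≤ x v
  le_one : ∀ v, x v ≤ 1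
  exists_eq_one : ∃ u, x u = 1
  sum_neighborFinset : ∀ v, ∑ w ∈ G.neighborFinset v, x w = lam1 G * x v

theorem exists_isPerronVector (hn : 0 < n) (G : SimpleGraph (Fin n)) :
    ∃ x, IsPerronVector G x := by
  obtain ⟨z, hz⟩ := (hasEigenvalue_lam1 hn G).exists_hasEigenvector
  have heig (v : Fin n) : ∑ w ∈ G.neighborFinset v, z w = lam1 G * z v := by
    rw [← adjMatrix_mulVec_eq_sum_neighborFinset, ← toLin'_apply, hz.apply_eq_smul]
    rfl
  -- Passing to absolute values does not decrease the Rayleigh quotient.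
  have habs := sum_neighborFinset_eq_of_mul_sum_sq_le (y := fun v ↦ |z v|) (le_refl (lam1 G)) <|
    calc lam1 G * ∑ v, |z v| ^ 2
        = ∑ v, z v * ∑ w ∈ G.neighborFinset v, z w := by
          simp only [heig, sq_abs, mul_sum]
          exact sum_congr rfl fun v _ ↦ by ring
      _ ≤ ∑ v, |z v| * ∑ w ∈ G.neighborFinset v, |z w| := by
          simp only [mul_sum, ← abs_mul]
          gcongr
          exact le_abs_self _
  obtain ⟨u, -, hu⟩ := exists_max_image univ (fun v ↦ |z v|) ⟨⟨0, hn⟩, mem_univ _⟩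
  have hpos : 0 < |z u| := by
    obtain ⟨v, hv⟩ := Function.ne_iff.mp hz.2
    exact (abs_pos.mpr hv).trans_le (hu v (mem_univ v))
  refine ⟨fun v ↦ |z v| / |z u|, fun v ↦ by positivity, fun v ↦ ?_, ⟨u, div_self hpos.ne'⟩,
    fun v ↦ ?_⟩
  · exact (div_le_one hpos).mpr (hu v (mem_univ v))
  · rw [← sum_div, habs, mul_div_assoc]

end Spectral

section Wheels

open Finset

variable {V : Type*} {G : SimpleGraph V} {m k : ℕ}

theorem exists_rim_of_containsCopy_wheelGraph (hm : 2 ≤ m)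
    (h : ContainsCopy (wheelGraph (m + 1)) G) :
    ∃ (w : V) (f : ℕ → V), Set.InjOn f (Set.Iio m) ∧ Function.Periodic f m ∧
      (∀ i, G.Adj (f i) (f (i + 1))) ∧ ∀ i, G.Adj w (f i) := by
  obtain ⟨e, he⟩ := h
  have hmod (i : ℕ) : i % m < m := i.mod_lt (by omega)
  refine ⟨e 0, fun i ↦ e (Fin.succ ⟨i % m, hmod i⟩), fun i hi j hj hij ↦ ?_, fun i ↦ ?_,
    fun i ↦ he _ _ ?_, fun i ↦ he _ _ ⟨(Fin.succ_ne_zero _).symm, Or.inl rfl⟩⟩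
  · have hmod_eq := congrArg Fin.val (Fin.succ_injective _ (e.injective hij))
    simpa only [Nat.mod_eq_of_lt (Set.mem_Iio.mp hi), Nat.mod_eq_of_lt (Set.mem_Iio.mp hj)]
      using hmod_eq
  · simp only [Nat.add_mod_right]
  · have hi := hmod i
    simp only [wheelGraph, ne_eq, Fin.ext_iff, Fin.val_succ, Nat.add_mod_eq_ite,
      Nat.mod_eq_of_lt (show 1 < m by omega)]
    split_ifs <;> omega

theorem containsCopy_wheelGraph_of_rim (hm : 0 < m) {w : V} {f : ℕ → V}
    (hinj : Set.InjOn f (Set.Iio m)) (hper : Function.Periodic f m)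
    (hrim : ∀ i, G.Adj (f i) (f (i + 1))) (hhub : ∀ i, G.Adj w (f i)) :
    ContainsCopy (wheelGraph (m + 1)) G := by
  have hwrap : f m = f 0 := by simpa using hper 0
  have hlt (i j : Fin m) (hadj : (wheelGraph (m + 1)).Adj i.succ j.succ) (hij : i < j) :
      G.Adj (f i) (f j) := by
    have hcases : (j : ℕ) = i + 1 ∨ ((i : ℕ) = 0 ∧ (j : ℕ) + 1 = m) := by
      have := hadj.2
      simp only [Fin.val_succ] at this
      omega
    rcases hcases with hj | ⟨hi, hj⟩
    · exact hj ▸ hrim i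
    · have := (hrim j).symm
      rwa [hj, hwrap, ← hi] at this
  refine ⟨⟨Fin.cons w fun i : Fin m ↦ f i, Fin.cons_injective_iff.mpr ⟨?_, ?_⟩⟩, fun a b ↦ ?_⟩
  · rintro ⟨i, hi⟩
    exact (hhub i).ne hi.symm
  · exact fun i j hij ↦ Fin.ext (hinj i.2 j.2 hij)
  · refine Fin.cases ?_ (fun i ↦ ?_) a <;> refine Fin.cases ?_ (fun j ↦ ?_) b <;> intro hadj
    · exact absurd hadj (SimpleGraph.irrefl _)
    · exact hhub j
    · exact (hhub i).symm
    · rcases lt_or_gt_of_ne (fun h : i = j ↦ hadj.1 (h ▸ rfl)) with hij | hij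
      · exact hlt i j hadj hij
      · exact (hlt j i hadj.symm hij).symm

theorem containsCopy_wheelGraph_of_list (hm : 0 < m) {w : V} {l : List V} (hlen : l.length = m)
    (hnd : l.Nodup) (hchain : l.IsChain G.Adj)
    (hclosed : ∀ a ∈ l.getLast?, ∀ b ∈ l.head?, G.Adj a b) (hhub : ∀ v ∈ l, G.Adj w v) :
    ContainsCopy (wheelGraph (m + 1)) G := by
  have hmod (i : ℕ) : i % m < l.length := by
    rw [hlen]
    exact i.mod_lt hm
  refine containsCopy_wheelGraph_of_rim hm (f := fun i ↦ l[i % m]'(hmod i))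
    (fun i hi j hj hij ↦ ?_) (fun i ↦ by simp only [Nat.add_mod_right]) (fun i ↦ ?_)
    fun i ↦ hhub _ (List.getElem_mem _)
  · simpa only [hnd.getElem_inj_iff, Nat.mod_eq_of_lt (Set.mem_Iio.mp hi),
      Nat.mod_eq_of_lt (Set.mem_Iio.mp hj)] using hij
  · have hi := hmod i
    rcases Nat.lt_or_ge (i % m + 1) m with hlt | hge
    · have hsucc : (i + 1) % m = i % m + 1 := by rw [← Nat.mod_add_mod, Nat.mod_eq_of_lt hlt]
      simp only [hsucc]
      exact List.isChain_iff_getElem.mp hchain _ _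
    · have hlast : i % m = l.length - 1 := by omega
      have hzero : (i + 1) % m = 0 := by
        rw [← Nat.mod_add_mod, show i % m + 1 = m by omega, Nat.mod_self]
      simp only [hlast, hzero]
      refine hclosed _ ?_ _ ?_
      · rw [List.getLast?_eq_getElem?]
        exact List.getElem?_eq_getElem _
      · rw [List.head?_eq_getElem?]
        exact List.getElem?_eq_getElem _

theorem flatten_zipWith_cons_perm {X : List V} {P : List (List V)} (h : X.length = P.length) :
    (List.zipWith List.cons X P).flatten.Perm (X ++ P.flatten) := by
  induction X generalizing P with
  | nil =>
    obtain rfl := List.length_eq_zero_iff.mp h.symm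
    rfl
  | cons a X ih =>
    obtain ⟨p, P, rfl⟩ := List.exists_of_length_succ P h.symm
    have hlen : X.length = P.length := by simpa using h
    exact (((ih hlen).append_left p).trans (List.perm_append_comm_assoc p X _)).cons a

theorem isChain_flatten_zipWith_cons {X : List V} {P : List (List V)}
    (hP : ∀ p ∈ P, p.IsChain G.Adj ∧ p ≠ []) (hXP : ∀ a ∈ X, ∀ b ∈ P.flatten, G.Adj a b) :
    (List.zipWith List.cons X P).flatten.IsChain G.Adj ∧
      ∀ a ∈ (List.zipWith List.cons X P).flatten.getLast?,
        ∀ b ∈ (List.zipWith List.cons X P).flatten.head?, G.Adj a b := by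
  have hmem : ∀ l ∈ List.zipWith List.cons X P, ∃ a ∈ X, ∃ p ∈ P, l = a :: p := by
    rw [← List.map_uncurry_zip_eq_zipWith]
    rintro l hl
    obtain ⟨⟨a, p⟩, hap, rfl⟩ := List.mem_map.mp hl
    exact ⟨a, (List.of_mem_zip hap).1, p, (List.of_mem_zip hap).2, rfl⟩
  have hends : ∀ l ∈ List.zipWith List.cons X P, ∀ l' ∈ List.zipWith List.cons X P,
      ∀ a ∈ l.getLast?, ∀ b ∈ l'.head?, G.Adj a b := by
    intro l hl l' hl' a ha b hb
    obtain ⟨c, -, p, hp, rfl⟩ := hmem l hl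
    obtain ⟨d, hd, q, -, rfl⟩ := hmem l' hl'
    obtain rfl : d = b := by simpa using hb
    rw [List.getLast?_cons_of_ne_nil (hP p hp).2] at ha
    exact (hXP d hd a (List.mem_flatten_of_mem hp (List.mem_of_getLast? ha))).symm
  refine ⟨(List.isChain_flatten fun h ↦ ?_).mpr ⟨fun l hl ↦ ?_, ?_⟩, fun a ha b hb ↦ ?_⟩
  · obtain ⟨a, -, p, -, h⟩ := hmem _ h
    exact List.cons_ne_nil _ _ h.symm
  · obtain ⟨a, ha, p, hp, rfl⟩ := hmem l hl
    exact List.isChain_cons.mpr ⟨fun b hb ↦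
      hXP a ha b (List.mem_flatten_of_mem hp (List.mem_of_mem_head? hb)), (hP p hp).1⟩
  · exact (List.pairwise_of_forall_mem_list fun l hl l' hl' ↦ hends l hl l' hl').isChain
  · rw [List.getLast?_flatten] at ha
    rw [List.head?_flatten] at hb
    obtain ⟨l, hl, hla⟩ := List.exists_of_findSome?_eq_some ha
    obtain ⟨l', hl', hlb⟩ := List.exists_of_findSome?_eq_some hb
    exact hends l (List.mem_reverse.mp hl) l' hl' a hla b hlb

/-- The rim alternates between the vertices of `X` and the paths of `P`. -/
theorem containsCopy_wheelGraph_of_paths (hm : 0 < m) {w : V} {X : List V}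
    {P : List (List V)} (hlen : X.length = P.length) (hsum : X.length + P.flatten.length = m)
    (hX : X.Nodup) (hP : P.flatten.Nodup) (hPchain : ∀ p ∈ P, p.IsChain G.Adj ∧ p ≠ [])
    (hXP : ∀ a ∈ X, ∀ b ∈ P.flatten, G.Adj a b) (hwX : ∀ a ∈ X, G.Adj w a)
    (hwP : ∀ b ∈ P.flatten, G.Adj w b) : ContainsCopy (wheelGraph (m + 1)) G := by
  have hperm := flatten_zipWith_cons_perm hlen
  obtain ⟨hchain, hclosed⟩ := isChain_flatten_zipWith_cons hPchain hXP
  refine containsCopy_wheelGraph_of_list (w := w) hm ?_ ?_ hchain hclosed fun v hv ↦ ?_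
  · rw [hperm.length_eq, List.length_append, hsum]
  · exact hperm.nodup_iff.mpr <|
      hX.append hP fun a ha ha' ↦ G.irrefl (hXP a ha a ha')
  · exact (List.mem_append.mp (hperm.mem_iff.mp hv)).elim (hwX v) (hwP v)

theorem containsCopy_wheelGraph_of_completeBipartite (hk : 0 < k) {w : V} {X Y : Finset V}
    (hX : #X = k) (hY : #Y = k) (hXY : ∀ a ∈ X, ∀ b ∈ Y, G.Adj a b) (hwX : ∀ a ∈ X, G.Adj w a)
    (hwY : ∀ b ∈ Y, G.Adj w b) : ContainsCopy (wheelGraph (2 * k + 1)) G := by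
  have hflat : (Y.toList.map ([·])).flatten = Y.toList := by
    rw [← List.flatMap_def, List.flatMap_singleton']
  refine containsCopy_wheelGraph_of_paths (by omega) (w := w) (X := X.toList)
    (P := Y.toList.map ([·])) ?_ ?_ X.nodup_toList ?_ ?_ ?_ ?_ ?_
  · simp [hX, hY]
  · simp only [hflat, length_toList, hX, hY, two_mul]
  · rw [hflat]
    exact Y.nodup_toList
  · simp
  · simpa [hflat] using hXY
  · simpa using hwX
  · simpa [hflat] using hwY

end Wheels

section Counting

open Finset

variable {V : Type*} {G : SimpleGraph V} {A B Q : Finset V} {v w : V}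

open Classical in
/-- The neighbours of `v` in the finite set `A`. -/
noncomputable def nbrsIn (G : SimpleGraph V) (A : Finset V) (v : V) : Finset V :=
  {w ∈ A | G.Adj v w}

open Classical in
/-- The non-neighbours of `v` in the finite set `A`, including `v` itself if `v ∈ A`. -/
noncomputable def nonNbrsIn (G : SimpleGraph V) (A : Finset V) (v : V) : Finset V :=
  {w ∈ A | ¬ G.Adj v w}

open Classical in
/-- The vertices of `A` adjacent to every vertex of `Q`. -/
noncomputable def commonNbrsIn (G : SimpleGraph V) (A Q : Finset V) : Finset V :=
  {w ∈ A | ∀ q ∈ Q, G.Adj q w}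

theorem mem_nbrsIn : w ∈ nbrsIn G A v ↔ w ∈ A ∧ G.Adj v w := by
  classical exact mem_filter

theorem mem_nonNbrsIn : w ∈ nonNbrsIn G A v ↔ w ∈ A ∧ ¬ G.Adj v w := by
  classical exact mem_filter

theorem mem_commonNbrsIn : w ∈ commonNbrsIn G A Q ↔ w ∈ A ∧ ∀ q ∈ Q, G.Adj q w := by
  classical exact mem_filter

theorem nbrsIn_subset : nbrsIn G A v ⊆ A := by
  classical exact filter_subset _ _

theorem adj_of_nonNbrsIn_eq_empty (h : nonNbrsIn G A v = ∅) (hw : w ∈ A) : G.Adj v w := by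
  classical exact not_not.mp (filter_eq_empty_iff.mp h hw)

theorem sum_nbrsIn_add_sum_nonNbrsIn {R : Type*} [AddCommMonoid R] (G : SimpleGraph V)
    (A : Finset V) (v : V) (f : V → R) :
    ∑ w ∈ nbrsIn G A v, f w + ∑ w ∈ nonNbrsIn G A v, f w = ∑ w ∈ A, f w := by
  classical exact sum_filter_add_sum_filter_not A _ f

theorem card_nbrsIn_add_card_nonNbrsIn (G : SimpleGraph V) (A : Finset V) (v : V) :
    #(nbrsIn G A v) + #(nonNbrsIn G A v) = #A := by
  classical exact card_filter_add_card_filter_not _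

theorem sum_sum_nbrsIn {R : Type*} [NonAssocSemiring R] (G : SimpleGraph V) (A B : Finset V)
    (f : V → R) :
    ∑ v ∈ A, ∑ w ∈ nbrsIn G B v, f w = ∑ w ∈ B, (#(nbrsIn G A w) : R) * f w := by
  rw [sum_comm' (s' := nbrsIn G A) (t' := B)]
  · simp only [sum_const, nsmul_eq_mul]
  · intro v w
    rw [mem_nbrsIn, mem_nbrsIn, G.adj_comm]
    tauto

theorem sum_card_nbrsIn_comm (G : SimpleGraph V) (A B : Finset V) :
    ∑ v ∈ A, #(nbrsIn G B v) = ∑ w ∈ B, #(nbrsIn G A w) := by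
  simpa only [sum_const, smul_eq_mul, mul_one, Nat.cast_id] using
    sum_sum_nbrsIn (R := ℕ) G A B fun _ ↦ 1

theorem sum_card_nonNbrsIn_comm (G : SimpleGraph V) (A B : Finset V) :
    ∑ v ∈ A, #(nonNbrsIn G B v) = ∑ w ∈ B, #(nonNbrsIn G A w) := by
  classical
  refine (sum_card_bipartiteAbove_eq_sum_card_bipartiteBelow fun v w ↦ ¬ G.Adj v w).trans ?_
  exact sum_congr rfl fun w _ ↦ by simp only [bipartiteBelow, nonNbrsIn, G.adj_comm w]

theorem sum_neighborFinset_eq_add [Fintype V] [DecidableEq V] {R : Type*} [AddCommMonoid R]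
    (G : SimpleGraph V) [DecidableRel G.Adj] (S : Finset V) (v : V) (f : V → R) :
    ∑ w ∈ G.neighborFinset v, f w = ∑ w ∈ nbrsIn G S v, f w + ∑ w ∈ nbrsIn G Sᶜ v, f w := by
  rw [← sum_union (disjoint_compl_right.mono nbrsIn_subset nbrsIn_subset)]
  congr 1
  ext w
  simp only [SimpleGraph.mem_neighborFinset, mem_union, mem_nbrsIn, mem_compl]
  tauto

theorem card_le_card_commonNbrsIn_add {b : ℝ} (hb : ∀ q ∈ Q, (#(nonNbrsIn G A q) : ℝ) ≤ b) :
    (#A : ℝ) ≤ #(commonNbrsIn G A Q) + #Q * b := by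
  classical
  have hcover : A ⊆ commonNbrsIn G A Q ∪ Q.biUnion (nonNbrsIn G A) := by
    intro w hw
    simp only [mem_union, mem_commonNbrsIn, mem_biUnion, mem_nonNbrsIn, hw, true_and]
    exact or_iff_not_imp_left.mpr fun h ↦ by push Not at h; exact h
  calc (#A : ℝ)
      ≤ #(commonNbrsIn G A Q) + ∑ q ∈ Q, (#(nonNbrsIn G A q) : ℝ) := by
        exact_mod_cast (card_le_card hcover).trans <|
          (card_union_le _ _).trans (Nat.add_le_add_left card_biUnion_le _)
    _ ≤ #(commonNbrsIn G A Q) + #Q * b := by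
        rw [← nsmul_eq_mul]
        gcongr
        exact sum_le_card_nsmul _ _ _ hb

theorem sum_le_card_filter_mul_add {f : V → ℝ} {b c : ℝ} (hb : ∀ v ∈ A, f v ≤ b) (hc : 0 ≤ c) :
    ∑ v ∈ A, f v ≤ #{v ∈ A | c ≤ f v} * b + #A * c := by
  rw [← sum_filter_add_sum_filter_not A (c ≤ f ·), ← nsmul_eq_mul]
  gcongr
  · exact sum_le_card_nsmul _ _ _ fun v hv ↦ hb v (mem_filter.mp hv).1
  · calc ∑ v ∈ A with ¬ c ≤ f v, f v ≤ #{v ∈ A | ¬ c ≤ f v} • c :=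
          sum_le_card_nsmul _ _ _ fun v hv ↦ (not_le.mp (mem_filter.mp hv).2).le
      _ ≤ #A * c := by
          rw [nsmul_eq_mul]
          gcongr
          exact filter_subset _ _

end Counting

section KovariSosTuran

open Finset

variable {V : Type*} {G : SimpleGraph V} {k : ℕ}

theorem exists_completeBipartite_of_card_lt {M W : Finset V}
    (hdeg : ∀ w ∈ W, k ≤ #(nbrsIn G M w)) (hcard : 2 ^ #M * k < #W) :
    ∃ X ⊆ M, ∃ Y ⊆ W, #X = k ∧ #Y = k ∧ ∀ a ∈ X, ∀ b ∈ Y, G.Adj a b := by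
  classical
  obtain ⟨T, -, hT⟩ := exists_lt_card_fiber_of_mul_lt_card_of_maps_to
    (fun w _ ↦ mem_powerset.mpr nbrsIn_subset : ∀ w ∈ W, nbrsIn G M w ∈ M.powerset)
    (by rwa [card_powerset])
  obtain ⟨Y, hYT, hY⟩ := exists_subset_card_eq hT.le
  have hYW : ∀ b ∈ Y, b ∈ W ∧ nbrsIn G M b = T := fun b hb ↦ mem_filter.mp (hYT hb)
  obtain ⟨w, hw⟩ := card_pos.mp (Nat.zero_lt_of_lt hT)
  obtain ⟨hwW, hwT⟩ := mem_filter.mp hw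
  obtain ⟨X, hXT, hX⟩ := exists_subset_card_eq (hwT ▸ hdeg w hwW)
  refine ⟨X, hXT.trans (hwT ▸ nbrsIn_subset), Y, fun b hb ↦ (hYW b hb).1, hX, hY,
    fun a ha b hb ↦ ?_⟩
  have hab : a ∈ nbrsIn G M b := (hYW b hb).2 ▸ hXT ha
  exact (mem_nbrsIn.mp hab).2.symm

theorem exists_completeBipartite_of_dense {ε n : ℝ} {m : ℕ} {A : Finset V} (hε : 0 < ε)
    (hm0 : 0 < m) (hm : 4 * k ≤ ε * m) (hn0 : 0 < n) (hn : 4 * (m + 2 ^ m * k) < ε * n)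
    (hA : #A ≤ n) (hdense : ε * n ^ 2 ≤ ∑ v ∈ A, (#(nbrsIn G A v) : ℝ)) :
    ∃ X ⊆ A, ∃ Y ⊆ A, #X = k ∧ #Y = k ∧ ∀ a ∈ X, ∀ b ∈ Y, G.Adj a b := by
  set H : Finset V := {v ∈ A | ε * n / 2 ≤ #(nbrsIn G A v)}
  have hH : (m : ℝ) ≤ #H := by
    have hsum : ε * n ^ 2 ≤ #H * n + #A * (ε * n / 2) :=
      hdense.trans <| sum_le_card_filter_mul_add (fun v _ ↦
        hA.trans' <| by exact_mod_cast card_le_card nbrsIn_subset) (by positivity)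
    have : #A * (ε * n / 2) ≤ n * (ε * n / 2) := by gcongr
    have : ε * n / 2 ≤ #H := le_of_mul_le_mul_right (by linarith) hn0
    have : (0 : ℝ) ≤ 2 ^ m * k := by positivity
    linarith [(Nat.cast_nonneg m : (0 : ℝ) ≤ m)]
  obtain ⟨M, hMH, hM⟩ := exists_subset_card_eq (Nat.cast_le.mp hH)
  set W : Finset V := {w ∈ A | (k : ℝ) ≤ #(nbrsIn G M w)}
  have hW : 2 ^ #M * k < #W := by
    have hsum : m * (ε * n / 2) ≤ #W * m + #A * k :=
      calc m * (ε * n / 2) ≤ ∑ v ∈ M, (#(nbrsIn G A v) : ℝ) := by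
            rw [← hM, ← nsmul_eq_mul]
            exact card_nsmul_le_sum _ _ _ fun v hv ↦ (mem_filter.mp (hMH hv)).2
        _ = ∑ w ∈ A, (#(nbrsIn G M w) : ℝ) := by exact_mod_cast sum_card_nbrsIn_comm G M A
        _ ≤ #W * m + #A * k := sum_le_card_filter_mul_add (fun w _ ↦ by
            exact_mod_cast hM ▸ card_le_card nbrsIn_subset) k.cast_nonneg
    have : n * (4 * k) ≤ n * (ε * m) := by gcongr
    have : #A * (k : ℝ) ≤ n * k := by gcongr
    have : ε * n / 4 ≤ #W :=
      le_of_mul_le_mul_right (by linarith) (Nat.cast_pos.mpr hm0 : (0 : ℝ) < m)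
    rw [hM]
    exact_mod_cast (by linarith [(Nat.cast_nonneg m : (0 : ℝ) ≤ m)] : (2 ^ m * k : ℝ) < #W)
  obtain ⟨X, hXM, Y, hYW, h⟩ := exists_completeBipartite_of_card_lt
    (fun w hw ↦ Nat.cast_le.mp (mem_filter.mp hw).2) hW
  exact ⟨X, hXM.trans (hMH.trans (filter_subset _ _)), Y, hYW.trans (filter_subset _ _), h⟩

universe u in
theorem exists_kovariSosTuran_bound (k : ℕ) {ε : ℝ} (hε : 0 < ε) :
    ∃ N : ℝ, ∀ n ≥ N, ∀ {V : Type u} (G : SimpleGraph V) (A : Finset V), #A ≤ n →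
      ε * n ^ 2 ≤ ∑ v ∈ A, (#(nbrsIn G A v) : ℝ) →
        ∃ X ⊆ A, ∃ Y ⊆ A, #X = k ∧ #Y = k ∧ ∀ a ∈ X, ∀ b ∈ Y, G.Adj a b := by
  obtain ⟨m, hm⟩ := exists_nat_ge (4 * k / ε)
  have hm' : 4 * k ≤ ε * (m + 1 : ℕ) := by
    rw [div_le_iff₀' hε] at hm
    push_cast
    linarith
  refine ⟨4 * ((m + 1 : ℕ) + 2 ^ (m + 1) * k) / ε + 1, fun n hn V G A ↦ ?_⟩
  have hn' : 4 * ((m + 1 : ℕ) + 2 ^ (m + 1) * k) / ε < n := by linarith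
  exact exists_completeBipartite_of_dense hε m.succ_pos hm' (hn'.trans_le' (by positivity))
    ((div_lt_iff₀' hε).mp hn')

end KovariSosTuran

section ReplaceNeighbors

open scoped Classical
open Finset

variable {V : Type*} {G : SimpleGraph V} {v a b : V} {Q : Finset V}

/-- The graph obtained from `G` by making `Q` (without `v`) the neighbourhood of `v`. -/
def replaceNeighbors (G : SimpleGraph V) (v : V) (Q : Finset V) : SimpleGraph V :=
  SimpleGraph.fromRel fun a b ↦ (a = v ∧ b ∈ Q) ∨ (a ≠ v ∧ b ≠ v ∧ G.Adj a b)

theorem replaceNeighbors_adj_self (hv : v ∉ Q) : (replaceNeighbors G v Q).Adj v b ↔ b ∈ Q := by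
  rw [replaceNeighbors, SimpleGraph.fromRel_adj]
  have (hb : b ∈ Q) : v ≠ b := fun h ↦ hv (h ▸ hb)
  grind

theorem replaceNeighbors_adj_of_ne (ha : a ≠ v) (hb : b ≠ v) :
    (replaceNeighbors G v Q).Adj a b ↔ G.Adj a b := by
  simp only [replaceNeighbors, SimpleGraph.fromRel_adj, ha, hb, G.adj_comm b a, ne_eq, false_and,
    not_false_eq_true, true_and, false_or, or_self, and_iff_right_iff_imp]
  exact fun h ↦ h.ne

theorem containsCopy_of_containsCopy_replaceNeighbors {ι : Type*} [Fintype ι] {F : SimpleGraph ι}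
    (hv : v ∉ Q)
    (hQ : ∀ Z : Finset V, #Z ≤ Fintype.card ι → ∃ s ∉ Z, ∀ q ∈ Q, q ∈ Z → G.Adj s q)
    (h : ContainsCopy F (replaceNeighbors G v Q)) : ContainsCopy F G := by
  obtain ⟨e, he⟩ := h
  obtain ⟨s, hs, hsQ⟩ := hQ (univ.image e) card_image_le
  have hes (i : ι) : e i ≠ s := fun h ↦ hs (mem_image.mpr ⟨i, mem_univ i, h⟩)
  have hadj {i j : ι} (hi : e i = v) (hij : F.Adj i j) : G.Adj s (e j) :=
    hsQ _ ((replaceNeighbors_adj_self hv).mp (hi ▸ he i j hij)) (mem_image_of_mem e (mem_univ j))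
  -- The copy avoids `s`, which can therefore take over the role of `v`.
  refine ⟨⟨fun i ↦ if e i = v then s else e i, fun i j hij ↦ ?_⟩, fun i j hij ↦ ?_⟩
  · have := hes i
    have := hes j
    exact e.injective (by grind)
  · change G.Adj (if e i = v then s else e i) (if e j = v then s else e j)
    split_ifs with hi hj hj
    · exact absurd (e.injective (hi.trans hj.symm)) hij.ne
    · exact hadj hi hij
    · exact (hadj hj hij.symm).symm
    · exact (replaceNeighbors_adj_of_ne hi hj).mp (he i j hij)

variable [Fintype V]

theorem sum_mul_sum_neighborFinset_eq_two_mul_add (G : SimpleGraph V) (v : V) (x : V → ℝ) :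
    ∑ a, x a * ∑ b ∈ G.neighborFinset a, x b =
      2 * x v * ∑ b ∈ G.neighborFinset v, x b +
        ∑ a ∈ {v}ᶜ, x a * ∑ b ∈ nbrsIn G {v}ᶜ a, x b := by
  have hcross : ∑ a ∈ {v}ᶜ, x a * ∑ b ∈ nbrsIn G {v} a, x b =
      x v * ∑ b ∈ G.neighborFinset v, x b := by
    rw [sum_neighborFinset_eq_add G {v} v x, mul_add, nbrsIn, sum_filter, sum_singleton,
      if_neg (G.irrefl), mul_zero, zero_add, nbrsIn, sum_filter, mul_sum]
    refine sum_congr rfl fun a _ ↦ ?_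
    rw [nbrsIn, sum_filter, sum_singleton, G.adj_comm a v, mul_ite, mul_ite, mul_zero, mul_zero,
      mul_comm]
  rw [← sum_add_sum_compl {v}, sum_singleton]
  simp only [fun a ↦ sum_neighborFinset_eq_add G {v} a x, mul_add, sum_add_distrib] at hcross ⊢
  linarith

theorem neighborFinset_replaceNeighbors_self (hv : v ∉ Q) :
    (replaceNeighbors G v Q).neighborFinset v = Q := by
  ext b
  rw [SimpleGraph.mem_neighborFinset, replaceNeighbors_adj_self hv]

theorem sum_mul_sum_neighborFinset_replaceNeighbors (hv : v ∉ Q) (x : V → ℝ) :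
    ∑ a, x a * ∑ b ∈ (replaceNeighbors G v Q).neighborFinset a, x b =
      ∑ a, x a * ∑ b ∈ G.neighborFinset a, x b +
        2 * x v * (∑ b ∈ Q, x b - ∑ b ∈ G.neighborFinset v, x b) := by
  have hrest : ∑ a ∈ {v}ᶜ, x a * ∑ b ∈ nbrsIn (replaceNeighbors G v Q) {v}ᶜ a, x b =
      ∑ a ∈ {v}ᶜ, x a * ∑ b ∈ nbrsIn G {v}ᶜ a, x b := by
    refine sum_congr rfl fun a ha ↦ ?_
    rw [nbrsIn, nbrsIn, filter_congr fun b hb ↦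
      replaceNeighbors_adj_of_ne (by simpa using ha) (by simpa using hb)]
  rw [sum_mul_sum_neighborFinset_eq_two_mul_add (replaceNeighbors G v Q) v,
    sum_mul_sum_neighborFinset_eq_two_mul_add G v, neighborFinset_replaceNeighbors_self hv, hrest]
  ring

/-- Otherwise replacing the neighbourhood of `v` by `Q` would not decrease the Rayleigh quotient of
`x`; then `x` is an eigenvector of the new graph too, which the row of `v` rules out. -/
theorem IsSpexWheel.sum_le_lam1_mul {t n : ℕ} {G : SimpleGraph (Fin n)} (hG : IsSpexWheel t G)
    {x : Fin n → ℝ} (hx : IsPerronVector G x) {v : Fin n} {Q : Finset (Fin n)} (hv : v ∉ Q)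
    (hfree : WheelFree t (replaceNeighbors G v Q)) : ∑ w ∈ Q, x w ≤ lam1 G * x v := by
  by_contra! hlt
  refine hlt.ne' ?_
  rw [← neighborFinset_replaceNeighbors_self (G := G) hv]
  refine sum_neighborFinset_eq_of_mul_sum_sq_le (hG.2 _ hfree) ?_ v
  have hgain := mul_nonneg (mul_nonneg zero_le_two (hx.nonneg v)) (sub_nonneg.mpr hlt.le)
  calc lam1 G * ∑ a, x a ^ 2 = ∑ a, x a * ∑ b ∈ G.neighborFinset a, x b := by
        simp only [hx.sum_neighborFinset, mul_sum]
        exact sum_congr rfl fun a _ ↦ by ring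
    _ ≤ ∑ a, x a * ∑ b ∈ (replaceNeighbors G v Q).neighborFinset a, x b := by
        rw [sum_mul_sum_neighborFinset_replaceNeighbors hv, hx.sum_neighborFinset v]
        exact le_add_of_nonneg_right hgain

end ReplaceNeighbors

section Join

open scoped Classical
open Finset

theorem modEq_of_periodic_of_injOn {V : Type*} {f : ℕ → V} {m a b : ℕ} (hm : 0 < m)
    (hinj : Set.InjOn f (Set.Iio m)) (hper : Function.Periodic f m) (hab : f a = f b) :
    a ≡ b [MOD m] :=
  hinj (Nat.mod_lt a hm) (Nat.mod_lt b hm) (by rwa [hper.map_mod_nat, hper.map_mod_nat])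

theorem exists_lt_notMem_and_notMem {V : Type*} {f : ℕ → V} {k s : ℕ} {T : Finset V} (hk : 0 < k)
    (hinj : Set.InjOn f (Set.Iio (2 * k))) (hper : Function.Periodic f (2 * k)) (hT : #T < k) :
    ∃ i < k, f (2 * i + s) ∉ T ∧ f (2 * i + s + 1) ∉ T := by
  by_contra! hmem
  let g (i : ℕ) : ℕ := if f (2 * i + s) ∈ T then 2 * i + s else 2 * i + s + 1
  have hg (i : ℕ) : g i = 2 * i + s ∨ g i = 2 * i + s + 1 := by grind
  have hmaps : Set.MapsTo (f ∘ g) (range k) T := fun i hi ↦ by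
    have := hmem i (mem_range.mp hi)
    simp only [Function.comp_apply, g]
    split_ifs with h
    exacts [h, this h]
  obtain ⟨i, hi, j, hj, hij, hfij⟩ :=
    exists_ne_map_eq_of_card_lt_of_maps_to ((card_range k).symm ▸ hT) hmaps
  rw [mem_range] at hi hj
  have hmod := modEq_of_periodic_of_injOn (by omega) hinj hper hfij
  have hshift (i : ℕ) : ∃ e ≤ 1, g i = s + (2 * i + e) := by
    rcases hg i with h | h
    exacts [⟨0, by omega, by omega⟩, ⟨1, le_rfl, by omega⟩]
  obtain ⟨d, hd, hgi⟩ := hshift i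
  obtain ⟨e, he, hgj⟩ := hshift j
  rw [hgi, hgj] at hmod
  have := (Nat.ModEq.add_left_cancel' s hmod).eq_of_lt_of_lt (by omega) (by omega)
  omega

variable {α β ι : Type*} {A : SimpleGraph α} {p q : β} {k : ℕ}

/-- The join of two graphs on disjoint vertex sets: every left vertex is adjacent to every right
vertex. -/
def joinGraph (A : SimpleGraph α) (B : SimpleGraph β) : SimpleGraph (α ⊕ β) :=
  (A ⊕g B) ⊔ completeBipartiteGraph α β

@[simp]
theorem joinGraph_adj_inl_inl {B : SimpleGraph β} {a a' : α} :
    (joinGraph A B).Adj (.inl a) (.inl a') ↔ A.Adj a a' := by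
  simp [joinGraph]

@[simp]
theorem joinGraph_adj_inr_inr {B : SimpleGraph β} {b b' : β} :
    (joinGraph A B).Adj (.inr b) (.inr b') ↔ B.Adj b b' := by
  simp [joinGraph]

theorem joinGraph_adj_inl_inr (A : SimpleGraph α) (B : SimpleGraph β) (a : α) (b : β) :
    (joinGraph A B).Adj (.inl a) (.inr b) := by
  simp [joinGraph]

/-- The rim splits into `k` disjoint edges in two ways, and each time some edge avoids the
neighbours of the hub inside `A`; both of these edges would be `pq`. -/
theorem not_adj_inl_rim [Fintype α] (hk : 2 ≤ k) (hdeg : ∀ a, #{a' | A.Adj a a'} < k)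
    {f : ℕ → α ⊕ β} (hinj : Set.InjOn f (Set.Iio (2 * k))) (hper : Function.Periodic f (2 * k))
    (hrim : ∀ i, (joinGraph A (SimpleGraph.edge p q)).Adj (f i) (f (i + 1))) (a : α) :
    ¬ ∀ i, (joinGraph A (SimpleGraph.edge p q)).Adj (.inl a) (f i) := by
  intro hhub
  let T : Finset (α ⊕ β) := ({a' | A.Adj a a'} : Finset α).map .inl
  have hT : #T < k := (card_map _).trans_lt (hdeg a)
  have hright {i : ℕ} (hi : f i ∉ T) : ∃ b, f i = .inr b := by
    rcases hfi : f i with a' | b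
    · have := hfi ▸ hhub i
      exact absurd (by simpa [T, hfi] using this) hi
    · exact ⟨b, rfl⟩
  have hedge {i : ℕ} (hi : f i ∉ T) (hi' : f (i + 1) ∉ T) :
      f i = .inr p ∧ f (i + 1) = .inr q ∨ f i = .inr q ∧ f (i + 1) = .inr p := by
    obtain ⟨b, hb⟩ := hright hi
    obtain ⟨b', hb'⟩ := hright hi'
    have hadj := hrim i
    rw [hb, hb', joinGraph_adj_inr_inr, SimpleGraph.edge_adj] at hadj
    simpa only [hb, hb', Sum.inr.injEq] using hadj.1
  obtain ⟨i, hi, hiT, hiT'⟩ := exists_lt_notMem_and_notMem (s := 0) (by omega) hinj hper hT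
  obtain ⟨j, hj, hjT, hjT'⟩ := exists_lt_notMem_and_notMem (s := 1) (by omega) hinj hper hT
  have hmod {a b : ℕ} (hab : f a = f b) : a ≡ b [MOD 2 * k] :=
    modEq_of_periodic_of_injOn (by omega) hinj hper hab
  have hsame : f (2 * i) = f (2 * j + 1) ∧ f (2 * i + 1) = f (2 * j + 1 + 1) ∨
      f (2 * i) = f (2 * j + 1 + 1) ∧ f (2 * i + 1) = f (2 * j + 1) := by
    rcases hedge hiT hiT' with h | h <;> rcases hedge hjT hjT' with h' | h' <;>
      simp only [add_zero] at h <;> simp only [h, h', and_self, true_or, or_true]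
  rcases hsame with ⟨h, -⟩ | ⟨h, h'⟩
  · have := (hmod h).eq_of_lt_of_lt (by omega) (by omega)
    omega
  · have hij := (hmod h').eq_of_lt_of_lt (by omega) (by omega)
    obtain rfl : i = j := by omega
    have := Nat.ModEq.add_left_cancel' (2 * i) (show 2 * i + 0 ≡ 2 * i + 2 [MOD 2 * k] from hmod h)
    have := this.eq_of_lt_of_lt (by omega) (by omega)
    omega

theorem exists_consecutive_inl_of_forall_adj_inr (hk : 0 < k) {f : ℕ → α ⊕ β}
    (hinj : Set.InjOn f (Set.Iio (2 * k))) (hper : Function.Periodic f (2 * k)) {b : β}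
    (hhub : ∀ i, (joinGraph A (SimpleGraph.edge p q)).Adj (.inr b) (f i)) :
    ∃ s, ∀ j, j + 1 < 2 * k → ∃ a, f (s + j) = .inl a := by
  by_cases hall : ∀ i, ∃ a, f i = .inl a
  · exact ⟨0, fun j _ ↦ hall _⟩
  push Not at hall
  obtain ⟨r, hr⟩ := hall
  have hright {i : ℕ} {b' : β} (hi : f i = .inr b') : b = p ∧ b' = q ∨ b = q ∧ b' = p := by
    have := hhub i
    rw [hi, joinGraph_adj_inr_inr, SimpleGraph.edge_adj] at this
    exact this.1
  refine ⟨r + 1, fun j hj ↦ ?_⟩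
  rcases hfr : f r with a | b₁
  · exact absurd hfr (hr a)
  rcases hfj : f (r + 1 + j) with a | b₂
  · exact ⟨a, rfl⟩
  have hrj := modEq_of_periodic_of_injOn (a := r + (1 + j)) (b := r + 0) (by omega) hinj hper (by
    rw [← add_assoc, hfj, add_zero, hfr]
    grind)
  have := (Nat.ModEq.add_left_cancel' r hrj).eq_of_lt_of_lt (by omega) (by omega)
  omega

/-- At most one rim vertex lies on the right, so `2k - 1` consecutive ones lie in a single class
of `c`. -/
theorem not_adj_inr_rim [Fintype α] (hk : 0 < k) {c : α → ι}
    (hadj : ∀ a a', A.Adj a a' → c a = c a') (hc : ∀ i, #{a | c a = i} < 2 * k - 1)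
    {f : ℕ → α ⊕ β} (hinj : Set.InjOn f (Set.Iio (2 * k))) (hper : Function.Periodic f (2 * k))
    (hrim : ∀ i, (joinGraph A (SimpleGraph.edge p q)).Adj (f i) (f (i + 1))) (b : β) :
    ¬ ∀ i, (joinGraph A (SimpleGraph.edge p q)).Adj (.inr b) (f i) := by
  intro hhub
  obtain ⟨s, hs⟩ := exists_consecutive_inl_of_forall_adj_inr hk hinj hper hhub
  have : Nonempty α := (hs 0 (by omega)).nonempty
  choose! g hg using hs
  have hclass (j : ℕ) (hj : j + 1 < 2 * k) : c (g j) = c (g 0) := by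
    induction j with
    | zero => rfl
    | succ j ih =>
      have := hrim (s + j)
      rw [add_assoc, hg j (by omega), hg (j + 1) hj, joinGraph_adj_inl_inl] at this
      rw [← hadj _ _ this, ih (by omega)]
  refine (hc (c (g 0))).not_ge ?_
  calc 2 * k - 1 = #(range (2 * k - 1)) := (card_range _).symm
    _ ≤ #{a | c a = c (g 0)} := by
        refine card_le_card_of_injOn g (fun j hj ↦ ?_) fun i hi j hj hij ↦ ?_
        · have := mem_range.mp hj
          simpa using hclass j (by omega)
        · have hi := mem_range.mp hi
          have hj := mem_range.mp hj
          have hfij : f (s + i) = f (s + j) := by rw [hg i (by omega), hg j (by omega), hij]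
          have hmod := modEq_of_periodic_of_injOn (by omega) hinj hper hfij
          exact (Nat.ModEq.add_left_cancel' s hmod).eq_of_lt_of_lt (by omega) (by omega)

theorem not_containsCopy_wheelGraph_joinGraph [Fintype α] (hk : 2 ≤ k)
    (hdeg : ∀ a, #{a' | A.Adj a a'} < k) {c : α → ι} (hadj : ∀ a a', A.Adj a a' → c a = c a')
    (hc : ∀ i, #{a | c a = i} < 2 * k - 1) :
    ¬ ContainsCopy (wheelGraph (2 * k + 1)) (joinGraph A (SimpleGraph.edge p q)) := by
  intro hW
  obtain ⟨a | b, f, hinj, hper, hrim, hhub⟩ := exists_rim_of_containsCopy_wheelGraph (by omega) hW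
  · exact not_adj_inl_rim hk hdeg hinj hper hrim a hhub
  · exact not_adj_inr_rim (by omega) hadj hc hinj hper hrim b hhub

section Rayleigh

variable [Fintype α] [Fintype β] {B : SimpleGraph β}

theorem neighborFinset_joinGraph_inl (a : α) :
    (joinGraph A B).neighborFinset (.inl a) = (A.neighborFinset a).disjSum univ := by
  ext (a' | b) <;> simp [joinGraph_adj_inl_inr]

theorem neighborFinset_joinGraph_inr (b : β) :
    (joinGraph A B).neighborFinset (.inr b) = univ.disjSum (B.neighborFinset b) := by
  ext (a | b') <;> simp [(joinGraph_adj_inl_inr A B _ _).symm]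

theorem sum_mul_sum_neighborFinset_joinGraph (A : SimpleGraph α) (B : SimpleGraph β) (t : ℝ) :
    ∑ v, Sum.elim (fun _ ↦ 1) (fun _ ↦ t) v *
        ∑ w ∈ (joinGraph A B).neighborFinset v, Sum.elim (fun _ ↦ 1) (fun _ ↦ t) w =
      2 * #A.edgeFinset + 2 * Fintype.card α * Fintype.card β * t +
        2 * #B.edgeFinset * t ^ 2 := by
  have hA : (∑ a, (A.degree a : ℝ)) = 2 * #A.edgeFinset := by
    exact_mod_cast A.sum_degrees_eq_twice_card_edges
  have hB : (∑ b, (B.degree b : ℝ)) = 2 * #B.edgeFinset := by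
    exact_mod_cast B.sum_degrees_eq_twice_card_edges
  simp only [Fintype.sum_sum_type, neighborFinset_joinGraph_inl, neighborFinset_joinGraph_inr,
    sum_disjSum, Sum.elim_inl, Sum.elim_inr, sum_const, nsmul_eq_mul, card_univ, mul_one, one_mul,
    SimpleGraph.card_neighborFinset_eq_degree, sum_add_distrib, mul_add, ← sum_mul, ← mul_sum, hA,
    hB]
  ring

end Rayleigh

end Join

section LowerBound

open scoped Classical
open Finset

theorem exists_wheelFree_of_not_containsCopy {V : Type*} [Fintype V] {n t : ℕ}
    (hcard : Fintype.card V = n) {G : SimpleGraph V} (hG : ¬ ContainsCopy (wheelGraph t) G) :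
    ∃ H : SimpleGraph (Fin n), WheelFree t H ∧
      ∀ x : V → ℝ, ∑ v, x v * ∑ w ∈ G.neighborFinset v, x w ≤ lam1 H * ∑ v, x v ^ 2 := by
  let e := Fintype.equivFinOfCardEq hcard
  obtain ⟨H, hH⟩ : ∃ H : SimpleGraph (Fin n), ∀ v w, H.Adj v w ↔ G.Adj (e.symm v) (e.symm w) :=
    ⟨G.comap e.symm, fun _ _ ↦ Iff.rfl⟩
  refine ⟨H, fun ⟨f, hf⟩ ↦ hG ⟨f.trans e.symm.toEmbedding, fun i j h ↦ (hH _ _).mp (hf i j h)⟩,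
    fun x ↦ ?_⟩
  have hrow (v : Fin n) : ∑ w ∈ H.neighborFinset v, x (e.symm w) =
      ∑ w ∈ G.neighborFinset (e.symm v), x w :=
    sum_equiv e.symm (by simp [hH]) fun _ _ ↦ rfl
  rw [← e.symm.sum_comp, ← e.symm.sum_comp]
  simpa only [Function.comp_apply, hrow] using sum_mul_sum_neighborFinset_le H (x ∘ e.symm)

/-- The disjoint union of `p` copies of the complete graph `K_k` and `q` copies of the complete
bipartite graph `K_{k-1,k-1}`, whose two sides are indexed by `Bool`. -/
def cliquesAndBicliques (p q k : ℕ) :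
    SimpleGraph (Fin p × Fin k ⊕ Fin q × (Fin (k - 1) × Bool)) :=
  (⊥ □ ⊤) ⊕g (⊥ □ (⊤ : SimpleGraph Bool).comap Prod.snd)

theorem card_filter_cliquesAndBicliques_adj {p q k : ℕ}
    (a : Fin p × Fin k ⊕ Fin q × (Fin (k - 1) × Bool)) :
    #{a' | (cliquesAndBicliques p q k).Adj a a'} = k - 1 := by
  rcases a with ⟨i, u⟩ | ⟨i, u, s⟩
  · trans #((univ.erase u).image fun u' ↦ Sum.inl (β := Fin q × (Fin (k - 1) × Bool)) (i, u'))
    · congr 1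
      ext (⟨j, u'⟩ | _) <;> simp [cliquesAndBicliques, eq_comm, and_comm]
    · rw [card_image_of_injective _ fun u u' h ↦ by simpa using h, card_erase_of_mem (mem_univ u),
        card_univ, Fintype.card_fin]
  · trans #(univ.image fun u' : Fin (k - 1) ↦ Sum.inr (α := Fin p × Fin k) (i, u', !s))
    · congr 1
      ext (_ | ⟨j, u', s'⟩)
      · simp [cliquesAndBicliques]
      · simp [cliquesAndBicliques, Bool.eq_not]
        tauto
    · rw [card_image_of_injective _ fun u u' h ↦ by simpa using h, card_univ, Fintype.card_fin]

theorem exists_regular_with_small_classes {k : ℕ} (hk : 3 ≤ k) (p q : ℕ) :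
    ∃ (α : Type) (_ : Fintype α) (A : SimpleGraph α) (ι : Type) (c : α → ι),
      Fintype.card α = p * k + q * ((k - 1) * 2) ∧ (∀ a, #{a' | A.Adj a a'} = k - 1) ∧
      (∀ a a', A.Adj a a' → c a = c a') ∧ ∀ i, #{a | c a = i} < 2 * k - 1 := by
  refine ⟨_, inferInstance, cliquesAndBicliques p q k, Fin p ⊕ Fin q, Sum.map Prod.fst Prod.fst,
    by simp, card_filter_cliquesAndBicliques_adj, ?_, ?_⟩
  · rintro (a | a) (a' | a') hadj <;> simp_all [cliquesAndBicliques, SimpleGraph.boxProd_adj]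
  · rintro (i | i)
    · calc _ ≤ #(univ.image fun u : Fin k ↦ Sum.inl (i, u)) :=
            card_le_card fun a ↦ by rcases a with ⟨j, u⟩ | a <;> simp +contextual [eq_comm]
        _ ≤ Fintype.card (Fin k) := card_image_le
        _ < 2 * k - 1 := by rw [Fintype.card_fin]; omega
    · calc _ ≤ #(univ.image fun u : Fin (k - 1) × Bool ↦ Sum.inr (i, u)) :=
            card_le_card fun a ↦ by rcases a with a | ⟨j, u⟩ <;> simp +contextual [eq_comm]
        _ ≤ Fintype.card (Fin (k - 1) × Bool) := card_image_le
        _ < 2 * k - 1 := by simp; omega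

theorem exists_eq_mul_add_mul {k c : ℕ} (hk : 2 ≤ k) (hc : k * k ≤ c) :
    ∃ p q, 2 * c = p * k + q * ((k - 1) * 2) := by
  obtain ⟨d, rfl⟩ : ∃ d, k = d + 1 := ⟨k - 1, by omega⟩
  have hle : c % d ≤ c / d := by
    refine (Nat.mod_lt c (by omega)).le.trans ((Nat.le_div_iff_mul_le (by omega)).mpr ?_)
    exact (Nat.mul_le_mul d.le_succ d.le_succ).trans hc
  refine ⟨2 * (c % d), c / d - c % d, ?_⟩
  conv_lhs => rw [← Nat.div_add_mod c d]
  obtain ⟨e, he⟩ := Nat.exists_eq_add_of_le hle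
  rw [he, Nat.add_sub_cancel_left, Nat.add_sub_cancel]
  ring

theorem card_edgeFinset_edge {V : Type*} {p q : V} (hpq : p ≠ q)
    [Fintype (SimpleGraph.edge p q).edgeSet] : #(SimpleGraph.edge p q).edgeFinset = 1 := by
  rw [SimpleGraph.edgeFinset, Set.toFinset_congr (SimpleGraph.edgeSet_edge_of_ne hpq),
    Set.toFinset_singleton, card_singleton]

theorem exists_wheelFree_quadratic_le {k a b n : ℕ} (hk : 3 ≤ k) (hb : 2 ≤ b) (hn : a + b = n)
    (ha : ∃ p q, a = p * k + q * ((k - 1) * 2)) :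
    ∃ H : SimpleGraph (Fin n), WheelFree (2 * k + 1) H ∧
      ∀ t : ℝ, a * (k - 1) + 2 * a * b * t + 2 * t ^ 2 ≤ lam1 H * (a + b * t ^ 2) := by
  obtain ⟨p, q, hpq⟩ := ha
  obtain ⟨α, _, A, ι, c, hcard, hdeg, hadj, hc⟩ := exists_regular_with_small_classes hk p q
  rw [← hpq] at hcard
  have hA : 2 * (#A.edgeFinset : ℝ) = a * (k - 1) := by
    have hdeg' (v : α) : A.degree v = k - 1 := by
      rw [← hdeg v, ← SimpleGraph.card_neighborFinset_eq_degree,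
        SimpleGraph.neighborFinset_eq_filter]
    have := A.sum_degrees_eq_twice_card_edges
    rw [sum_congr rfl fun v _ ↦ hdeg' v, sum_const, card_univ, hcard, smul_eq_mul] at this
    rw [← Nat.cast_pred (by omega)]
    exact_mod_cast this.symm
  obtain ⟨u, v, huv⟩ : ∃ u v : Fin b, u ≠ v := ⟨⟨0, by omega⟩, ⟨1, by omega⟩, by simp⟩
  obtain ⟨H, hH, hquad⟩ := exists_wheelFree_of_not_containsCopy (n := n)
    (by rw [Fintype.card_sum, hcard, Fintype.card_fin, hn])
    (not_containsCopy_wheelGraph_joinGraph (p := u) (q := v) (by omega)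
      (fun a ↦ by rw [hdeg]; omega) hadj hc)
  refine ⟨H, hH, fun t ↦ ?_⟩
  have := hquad (Sum.elim (fun _ ↦ 1) fun _ ↦ t)
  rw [sum_mul_sum_neighborFinset_joinGraph, hA, @card_edgeFinset_edge _ u v huv, hcard,
    Fintype.card_fin] at this
  simpa [hcard] using this

theorem sq_sub_mul_ge_of_forall_quadratic_le {A B D μ : ℝ} (hA : 0 < A) (hB : 0 < B) (hD : 0 ≤ D)
    (hlarge : D / 2 + 7 / 8 * B ≤ √(D ^ 2 / 4 + A * B + 7 / 4))
    (h : ∀ t : ℝ, A * D + 2 * A * B * t + 2 * t ^ 2 ≤ μ * (A + B * t ^ 2)) :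
    D ≤ μ ∧ A * B + 7 / 4 ≤ μ ^ 2 - D * μ := by
  set R := √(D ^ 2 / 4 + A * B + 7 / 4)
  have hR_sq : R ^ 2 = D ^ 2 / 4 + A * B + 7 / 4 := Real.sq_sqrt (by positivity)
  -- `D / 2 + R` is the larger root of `ρ ^ 2 - D * ρ = A * B + 7 / 4`; testing with the
  -- weight `t = (ρ - D) / B` on the right shows that it is at most `μ`.
  set t := (R - D / 2) / B with ht
  have hBt : B * t = R - D / 2 := mul_div_cancel₀ _ hB.ne'
  have ht_ge : 7 / 8 ≤ t := by
    rw [ht, le_div_iff₀ hB]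
    linarith
  have hpos : 0 < A + B * t ^ 2 := by positivity
  have hroot : D / 2 + R ≤ μ := by
    refine le_of_mul_le_mul_right ((sub_nonneg.mp ?_).trans (h t)) hpos
    have hfactor : A * D + 2 * A * B * t + 2 * t ^ 2 - (D / 2 + R) * (A + B * t ^ 2) =
        t * (2 * t - 7 / 4) := by
      linear_combination (A - (D / 2 + R) * t) * hBt - t * hR_sq
    rw [hfactor]
    exact mul_nonneg (by linarith) (by linarith)
  constructor
  · nlinarith [mul_pos hA hB, mul_nonneg hB.le hB.le]
  · nlinarith [mul_nonneg (sub_nonneg.mpr hroot) (by linarith : 0 ≤ μ - (D / 2 - R))]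

theorem exists_wheelFree_sq_sub_mul_ge {k : ℕ} (hk : 3 ≤ k) : ∃ N : ℕ, ∀ n ≥ N,
    ∃ H : SimpleGraph (Fin n), WheelFree (2 * k + 1) H ∧ (k : ℝ) - 1 ≤ lam1 H ∧
      (n : ℝ) ^ 2 / 4 + 3 / 4 ≤ lam1 H ^ 2 - (k - 1) * lam1 H := by
  refine ⟨4 * k * k + 8 * k + 60, fun n hn ↦ ?_⟩
  obtain ⟨c, hc, hc'⟩ : ∃ c, n ≤ 4 * c + 2 ∧ 4 * c ≤ n + 1 := ⟨(n + 1) / 4, by omega, by omega⟩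
  obtain ⟨b, hb⟩ : ∃ b, 2 * c + b = n := Nat.exists_eq_add_of_le' (by omega : 2 * c ≤ n) |>.imp
    fun b hb ↦ by omega
  obtain ⟨H, hH, hquad⟩ := exists_wheelFree_quadratic_le hk (by omega) hb
    (exists_eq_mul_add_mul (by omega) (by nlinarith))
  have hkR : (3 : ℝ) ≤ k := by exact_mod_cast hk
  have hnR : 8 * k + 60 ≤ (n : ℝ) := by exact_mod_cast (by omega : 8 * k + 60 ≤ n)
  have hsum : ((2 * c : ℕ) : ℝ) + b = n := by exact_mod_cast hb
  have hdiff : |((2 * c : ℕ) : ℝ) - n / 2| ≤ 1 := by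
    have h₁ : (n : ℝ) ≤ 2 * (2 * c : ℕ) + 2 := by exact_mod_cast (by omega)
    have h₂ : (2 * (2 * c : ℕ) : ℝ) ≤ n + 2 := by exact_mod_cast (by omega)
    exact abs_le.mpr ⟨by linarith, by linarith⟩
  have hprod : (n : ℝ) ^ 2 / 4 - 1 ≤ (2 * c : ℕ) * b := by
    rw [← sub_eq_iff_eq_add'.mpr hsum.symm]
    nlinarith [(sq_le_one_iff_abs_le_one _).mpr hdiff]
  obtain ⟨hlow, hupp⟩ := abs_le.mp hdiff
  obtain ⟨hD, hlam⟩ := sq_sub_mul_ge_of_forall_quadratic_le (by linarith) (by linarith)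
    (by linarith) (Real.le_sqrt_of_sq_le (by nlinarith)) hquad
  exact ⟨H, hH, hD, by linarith⟩

theorem exists_forall_isSpexWheel_lam1_ge {k : ℕ} (hk : 3 ≤ k) : ∃ N : ℕ, ∀ n ≥ N,
    ∀ G : SimpleGraph (Fin n), IsSpexWheel (2 * k + 1) G → (n : ℝ) / 2 ≤ lam1 G ∧
      (n : ℝ) ^ 2 / 4 + 3 / 4 ≤ lam1 G ^ 2 - (k - 1) * lam1 G := by
  obtain ⟨N, hN⟩ := exists_wheelFree_sq_sub_mul_ge hk
  refine ⟨N, fun n hn G hG ↦ ?_⟩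
  obtain ⟨H, hH, hlow, hquad⟩ := hN n hn
  have hle := hG.2 H hH
  have hkR : (3 : ℝ) ≤ k := by exact_mod_cast hk
  have hmono : lam1 H ^ 2 - (k - 1) * lam1 H ≤ lam1 G ^ 2 - (k - 1) * lam1 G := by nlinarith
  refine ⟨abs_le_of_sq_le_sq' ?_ (by linarith) |>.2, hquad.trans hmono⟩
  nlinarith

end LowerBound

section MaxCut

open scoped Classical
open Finset

variable {n : ℕ} {G : SimpleGraph (Fin n)} {S T : Finset (Fin n)} {v : Fin n}

theorem cutCount_eq_sum_card_nbrsIn (G : SimpleGraph (Fin n)) (S : Finset (Fin n)) :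
    cutCount G S = ∑ v ∈ S, #(nbrsIn G Sᶜ v) := by
  rw [cutCount, ← card_sigma]
  refine card_equiv (Equiv.sigmaEquivProd _ _).symm fun p ↦ ?_
  simp only [mem_filter, mem_univ, true_and, mem_sigma, mem_nbrsIn, mem_compl,
    Equiv.sigmaEquivProd_symm_apply]
  tauto

theorem cutCount_compl (G : SimpleGraph (Fin n)) (S : Finset (Fin n)) :
    cutCount G Sᶜ = cutCount G S := by
  rw [cutCount_eq_sum_card_nbrsIn, cutCount_eq_sum_card_nbrsIn, compl_compl, sum_card_nbrsIn_comm]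

theorem cutCount_erase_add (hv : v ∈ S) :
    cutCount G (S.erase v) + #(nbrsIn G Sᶜ v) = cutCount G S + #(nbrsIn G S v) := by
  have hself : nbrsIn G (S.erase v) v = nbrsIn G S v := by
    ext w
    simp only [mem_nbrsIn, mem_erase]
    exact ⟨fun h ↦ ⟨h.1.2, h.2⟩, fun h ↦ ⟨⟨h.2.ne', h.1⟩, h.2⟩⟩
  rw [cutCount_eq_sum_card_nbrsIn, cutCount_eq_sum_card_nbrsIn, compl_erase, sum_card_nbrsIn_comm,
    sum_insert (by simpa using hv), hself, sum_card_nbrsIn_comm, ← add_sum_erase S _ hv]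
  ring

theorem IsMaxCut.symm (h : IsMaxCut G S T) : IsMaxCut G T S := by
  obtain ⟨rfl, hmax⟩ := h
  exact ⟨(compl_compl S).symm, fun S' ↦ cutCount_compl G S ▸ hmax S'⟩

theorem IsMaxCut.card_nbrsIn_le (h : IsMaxCut G S T) (hv : v ∈ S) :
    #(nbrsIn G S v) ≤ #(nbrsIn G T v) := by
  obtain ⟨rfl, hmax⟩ := h
  have := cutCount_erase_add (G := G) hv
  have := hmax (S.erase v)
  lia

theorem IsPerronVector.lam1_sq_le {x : Fin n → ℝ} (hx : IsPerronVector G x) {u : Fin n}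
    (hu : x u = 1) :
    lam1 G ^ 2 ≤ (∑ v ∈ G.neighborFinset u, #(nbrsIn G (G.neighborFinset u) v) : ℕ) +
      cutCount G (G.neighborFinset u) := by
  calc lam1 G ^ 2 = ∑ v ∈ G.neighborFinset u, ∑ w ∈ G.neighborFinset v, x w := by
        simp only [hx.sum_neighborFinset, ← mul_sum, hu]
        ring
    _ ≤ ∑ v ∈ G.neighborFinset u, ∑ _w ∈ G.neighborFinset v, (1 : ℝ) :=
        sum_le_sum fun v _ ↦ sum_le_sum fun _ _ ↦ hx.le_one _
    _ = _ := by
        rw [cutCount_eq_sum_card_nbrsIn, Nat.cast_sum, Nat.cast_sum, ← sum_add_distrib]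
        refine sum_congr rfl fun v _ ↦ ?_
        rw [sum_neighborFinset_eq_add G (G.neighborFinset u)]
        simp only [sum_const, nsmul_eq_mul, mul_one]

theorem exists_isMaxCut_cutCount_ge {k : ℕ} (hk : 0 < k) {ε : ℝ} (hε : 0 < ε) :
    ∃ N : ℕ, ∀ n ≥ N, ∀ G : SimpleGraph (Fin n), WheelFree (2 * k + 1) G → (n : ℝ) / 2 ≤ lam1 G →
      ∃ S, IsMaxCut G S Sᶜ ∧ (n : ℝ) ^ 2 / 4 - ε * n ^ 2 ≤ cutCount G S := by
  obtain ⟨N, hN⟩ := exists_kovariSosTuran_bound k hε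
  refine ⟨⌈N⌉₊ + 1, fun n hn G hG hlam ↦ ?_⟩
  obtain ⟨x, hx⟩ := exists_isPerronVector (by lia) G
  obtain ⟨u, hu⟩ := hx.exists_eq_one
  obtain ⟨S, -, hS⟩ := exists_max_image univ (cutCount G) ⟨∅, mem_univ _⟩
  -- A dense neighbourhood of `u` would contain `K_{k,k}`, hence a wheel with hub `u`.
  have hsparse : ∑ v ∈ G.neighborFinset u, (#(nbrsIn G (G.neighborFinset u) v) : ℝ) <
      ε * n ^ 2 := by
    by_contra! hdense
    obtain ⟨X, hXu, Y, hYu, hX, hY, hXY⟩ := hN n ((Nat.le_ceil N).trans (by exact_mod_cast by lia))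
      G _ (by exact_mod_cast (card_le_univ _).trans_eq (Fintype.card_fin n)) hdense
    exact hG (containsCopy_wheelGraph_of_completeBipartite hk hX hY hXY
      (fun a ha ↦ (G.mem_neighborFinset u a).mp (hXu ha))
      fun b hb ↦ (G.mem_neighborFinset u b).mp (hYu hb))
  refine ⟨S, ⟨rfl, fun S' ↦ hS S' (mem_univ _)⟩, ?_⟩
  have hle := hx.lam1_sq_le hu
  have hcut : (cutCount G (G.neighborFinset u) : ℝ) ≤ cutCount G S := by
    exact_mod_cast hS _ (mem_univ _)
  have hsq : ((n : ℝ) / 2) ^ 2 ≤ lam1 G ^ 2 := by gcongr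
  push_cast at hle
  linarith

end MaxCut

section NearlyCompleteCut

open scoped Classical
open Finset

variable {n k : ℕ} {G : SimpleGraph (Fin n)} {A B Q : Finset (Fin n)} {v : Fin n}
  {x : Fin n → ℝ} {d g m : ℝ}

/-- The vertices of `A` with at most `m` non-neighbours in `B`. -/
noncomputable def typicalVertices (G : SimpleGraph (Fin n)) (A B : Finset (Fin n)) (m : ℝ) :
    Finset (Fin n) :=
  {v ∈ A | (#(nonNbrsIn G B v) : ℝ) ≤ m}

theorem typicalVertices_subset : typicalVertices G A B m ⊆ A :=
  filter_subset _ _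

theorem card_le_card_typicalVertices_add (hm : 0 < m)
    (h : ∑ v ∈ A, (#(nonNbrsIn G B v) : ℝ) ≤ m ^ 2) :
    (#A : ℝ) ≤ #(typicalVertices G A B m) + m := by
  have hcard : (#(typicalVertices G A B m) : ℝ) + #{v ∈ A | ¬ (#(nonNbrsIn G B v) : ℝ) ≤ m} = #A :=
    by exact_mod_cast card_filter_add_card_filter_not _
  suffices #{v ∈ A | ¬ (#(nonNbrsIn G B v) : ℝ) ≤ m} * m ≤ m * m by
    linarith [le_of_mul_le_mul_right this hm]
  calc _ ≤ ∑ v ∈ A with ¬ (#(nonNbrsIn G B v) : ℝ) ≤ m, (#(nonNbrsIn G B v) : ℝ) := by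
        rw [← nsmul_eq_mul]
        exact card_nsmul_le_sum _ _ _ fun v hv ↦ (not_le.mp (mem_filter.mp hv).2).le
    _ ≤ ∑ v ∈ A, (#(nonNbrsIn G B v) : ℝ) :=
        sum_le_sum_of_subset_of_nonneg (filter_subset _ _) fun _ _ _ ↦ Nat.cast_nonneg _
    _ ≤ m * m := by rwa [← sq]

/-- One side `A` of a cut `(A, B)` that is nearly a balanced complete bipartite graph: `A` has
almost half of the vertices, all but `d` of them have at most `d` non-neighbours in `B`, and no
vertex of `A` has more than `g` neighbours in `A`. -/
structure IsNearlyCompleteSide (G : SimpleGraph (Fin n)) (A B : Finset (Fin n)) (d g : ℝ) :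
    Prop where
  le_card : (n : ℝ) / 2 - d ≤ #A
  card_le : (#A : ℝ) ≤ #(typicalVertices G A B d) + d
  card_nbrsIn_le : ∀ v ∈ A, (#(nbrsIn G A v) : ℝ) ≤ g

theorem card_add_card_eq_of_eq_compl (hAB : B = Aᶜ) : (#A : ℝ) + #B = n := by
  rw [hAB]
  exact_mod_cast (card_add_card_compl A).trans (Fintype.card_fin n)

theorem card_nbrsIn_le_of_wheelFree (hk : 0 < k) (hG : WheelFree (2 * k + 1) G) (hd : 1 ≤ d)
    (hA : (#A : ℝ) ≤ #(typicalVertices G A B d) + d) (hv : #(nbrsIn G A v) ≤ #(nbrsIn G B v)) :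
    (#(nbrsIn G A v) : ℝ) ≤ 2 * k * d := by
  by_contra! hlarge
  have hk1 : (1 : ℝ) ≤ k := by exact_mod_cast hk
  have hkd : (k : ℝ) ≤ k * d := le_mul_of_one_le_right k.cast_nonneg hd
  have hdkd : d ≤ k * d := le_mul_of_one_le_left (by linarith) hk1
  have htypical : k ≤ #(nbrsIn G (typicalVertices G A B d) v) := by
    have hsub : nbrsIn G A v ⊆
        nbrsIn G (typicalVertices G A B d) v ∪ A \ typicalVertices G A B d := by
      intro w hw
      simp only [mem_union, mem_sdiff, mem_nbrsIn] at hw ⊢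
      tauto
    have hcard := (card_le_card hsub).trans (card_union_le _ _)
    rw [card_sdiff_of_subset typicalVertices_subset] at hcard
    have hle := card_le_card (typicalVertices_subset (G := G) (A := A) (B := B) (m := d))
    have : (#(nbrsIn G A v) : ℝ) + #(typicalVertices G A B d) ≤
        #(nbrsIn G (typicalVertices G A B d) v) + #A := by exact_mod_cast by lia
    exact_mod_cast (by linarith : (k : ℝ) ≤ #(nbrsIn G (typicalVertices G A B d) v))
  obtain ⟨X, hXv, hX⟩ := exists_subset_card_eq htypical
  have hcommon := card_le_card_commonNbrsIn_add (G := G) (A := nbrsIn G B v) (Q := X) (b := d) <| by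
    intro q hq
    refine (Nat.cast_le.mpr (card_le_card ?_)).trans (mem_filter.mp (mem_nbrsIn.mp (hXv hq)).1).2
    exact filter_subset_filter _ nbrsIn_subset
  obtain ⟨Y, hYv, hY⟩ := exists_subset_card_eq (s := commonNbrsIn G (nbrsIn G B v) X) (n := k) <| by
    rify at hv ⊢
    rw [hX] at hcommon
    linarith
  refine hG (containsCopy_wheelGraph_of_completeBipartite hk hX hY
    (fun a ha b hb ↦ (mem_commonNbrsIn.mp (hYv hb)).2 a ha)
    (fun a ha ↦ (mem_nbrsIn.mp (hXv ha)).2)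
    fun b hb ↦ (mem_nbrsIn.mp (mem_commonNbrsIn.mp (hYv hb)).1).2)

theorem IsMaxCut.isNearlyCompleteSide (hk : 0 < k) (hG : WheelFree (2 * k + 1) G)
    (hcut : IsMaxCut G A B) (hd : 1 ≤ d) (hsize : (n : ℝ) ^ 2 / 4 - d ^ 2 ≤ cutCount G A) :
    IsNearlyCompleteSide G A B d (2 * k * d) := by
  have hAB := card_add_card_eq_of_eq_compl hcut.1
  have hmissing : (cutCount G A : ℝ) + ∑ v ∈ A, (#(nonNbrsIn G B v) : ℝ) = #A * #B := by
    rw [cutCount_eq_sum_card_nbrsIn, ← hcut.1]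
    push_cast
    rw [← sum_add_distrib, ← nsmul_eq_mul, ← sum_const]
    exact sum_congr rfl fun v _ ↦ by exact_mod_cast card_nbrsIn_add_card_nonNbrsIn G B v
  have hprod : (#A : ℝ) * #B = (n : ℝ) ^ 2 / 4 - (#A - (n : ℝ) / 2) ^ 2 := by
    rw [← hAB]
    ring
  have hnonneg : 0 ≤ ∑ v ∈ A, (#(nonNbrsIn G B v) : ℝ) := sum_nonneg fun _ _ ↦ Nat.cast_nonneg _
  have htypical : (#A : ℝ) ≤ #(typicalVertices G A B d) + d :=
    card_le_card_typicalVertices_add (by linarith) (by linarith [sq_nonneg ((#A : ℝ) - n / 2)])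
  refine ⟨?_, htypical, fun v hv ↦
    card_nbrsIn_le_of_wheelFree hk hG hd htypical (hcut.card_nbrsIn_le hv)⟩
  have : |(#A : ℝ) - n / 2| ≤ d := abs_le_of_sq_le_sq (by linarith) (by linarith)
  linarith [(abs_le.mp this).1]

theorem IsSpexWheel.sum_le_lam1_mul_of_card_nonNbrsIn_le {t : ℕ} (hG : IsSpexWheel t G)
    (hx : IsPerronVector G x) (hm : 0 ≤ m) (hQ : ∀ q ∈ Q, (#(nonNbrsIn G A q) : ℝ) ≤ m)
    (hA : t * (m + 1) < #A) (hv : v ∉ Q) : ∑ w ∈ Q, x w ≤ lam1 G * x v := by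
  refine hG.sum_le_lam1_mul hx hv fun hcopy ↦ hG.1 <|
    containsCopy_of_containsCopy_replaceNeighbors hv (fun Z hZ ↦ ?_) hcopy
  rw [Fintype.card_fin] at hZ
  have hcommon := card_le_card_commonNbrsIn_add (Q := Q ∩ Z)
    fun q hq ↦ hQ q (mem_of_mem_inter_left hq)
  have hQZ : (#(Q ∩ Z) : ℝ) ≤ t := by exact_mod_cast (card_le_card inter_subset_right).trans hZ
  have hlt : #Z < #(commonNbrsIn G A (Q ∩ Z)) := by
    have : (#Z : ℝ) ≤ t := by exact_mod_cast hZ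
    have : #(Q ∩ Z) * m ≤ t * m := by gcongr
    exact_mod_cast (by linarith : (#Z : ℝ) < #(commonNbrsIn G A (Q ∩ Z)))
  obtain ⟨s, hs, hsZ⟩ := exists_mem_notMem_of_card_lt_card hlt
  exact ⟨s, hsZ, fun q hq hqZ ↦
    ((mem_commonNbrsIn.mp hs).2 q (mem_inter.mpr ⟨hq, hqZ⟩)).symm⟩

theorem IsPerronVector.sum_le_card (hx : IsPerronVector G x) : ∑ v ∈ A, x v ≤ #A := by
  simpa only [nsmul_eq_mul, mul_one] using sum_le_card_nsmul A x 1 fun v _ ↦ hx.le_one v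

theorem IsPerronVector.sum_nbrsIn_add_sum_nbrsIn_eq (hx : IsPerronVector G x) (hAB : B = Aᶜ)
    (v : Fin n) : ∑ w ∈ nbrsIn G A v, x w + ∑ w ∈ nbrsIn G B v, x w = lam1 G * x v := by
  rw [hAB, ← hx.sum_neighborFinset, sum_neighborFinset_eq_add G A]

theorem IsPerronVector.lam1_mul_le (hx : IsPerronVector G x) (hAB : B = Aᶜ) (v : Fin n) :
    lam1 G * x v ≤ #(nbrsIn G A v) + ∑ w ∈ B, x w := by
  rw [← hx.sum_nbrsIn_add_sum_nbrsIn_eq hAB]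
  gcongr
  · exact hx.sum_le_card
  · exact fun w _ _ ↦ hx.nonneg w
  · exact nbrsIn_subset

theorem IsPerronVector.sum_le_lam1_mul_add (hx : IsPerronVector G x) (hAB : B = Aᶜ) (v : Fin n) :
    ∑ w ∈ B, x w ≤ lam1 G * x v + #(nonNbrsIn G B v) := by
  rw [← hx.sum_nbrsIn_add_sum_nbrsIn_eq hAB, ← sum_nbrsIn_add_sum_nonNbrsIn G B v]
  have : 0 ≤ ∑ w ∈ nbrsIn G A v, x w := sum_nonneg fun w _ ↦ hx.nonneg w
  linarith [hx.sum_le_card (A := nonNbrsIn G B v)]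

section

variable (hx : IsPerronVector G x) (hlam : (n : ℝ) / 2 ≤ lam1 G) (hAB : B = Aᶜ)
  (hA : IsNearlyCompleteSide G A B d g) (hB : IsNearlyCompleteSide G B A d g) (hd : 0 ≤ d)
  (hdg : 3 * d ≤ g) (hgn : g + d ≤ n / 2) {u : Fin n} (hu : x u = 1) (huA : u ∈ A)

include hx hAB hA hu huA

theorem lam1_le_sum_add : lam1 G ≤ ∑ w ∈ B, x w + g := by
  have := hx.lam1_mul_le hAB u
  rw [hu, mul_one] at this
  linarith [hA.card_nbrsIn_le u huA]

theorem lam1_le_half_add (hdg : d ≤ g) : lam1 G ≤ n / 2 + 2 * g := by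
  linarith [lam1_le_sum_add hx hAB hA hu huA, hx.sum_le_card (A := B), hA.le_card,
    card_add_card_eq_of_eq_compl hAB]

include hlam hdg

theorem half_sub_le_sum_typicalVertices_right (hB : IsNearlyCompleteSide G B A d g) :
    (n : ℝ) / 2 - 2 * g ≤ ∑ w ∈ typicalVertices G B A d, x w := by
  have hsum := lam1_le_sum_add hx hAB hA hu huA
  rw [← sum_sdiff (typicalVertices_subset (G := G) (A := B) (B := A) (m := d))] at hsum
  have hcard := card_sdiff_add_card_eq_card
    (typicalVertices_subset (G := G) (A := B) (B := A) (m := d))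
  rify at hcard
  linarith [hB.card_le, hx.sum_le_card (A := B \ typicalVertices G B A d)]

include hd hgn

theorem half_sub_le_sum_typicalVertices_left :
    (n : ℝ) / 2 - 2 * g ≤ ∑ w ∈ typicalVertices G A B d, x w := by
  have hlam0 : 0 < lam1 G := hlam.trans_lt' (by have := u.pos; positivity)
  have hB := lam1_le_sum_add hx hAB hA hu huA
  have hcard : (n : ℝ) / 2 - 2 * d ≤ #(typicalVertices G A B d) := by
    linarith [hA.le_card, hA.card_le]
  refine le_of_mul_le_mul_left ?_ hlam0
  calc lam1 G * ((n : ℝ) / 2 - 2 * g)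
      ≤ lam1 G * (n / 2 - 2 * d - (g + d)) :=
        mul_le_mul_of_nonneg_left (by linarith) hlam0.le
    _ ≤ (n / 2 - 2 * d) * (lam1 G - g - d) := by
        have := mul_le_mul_of_nonneg_right hlam (by linarith : 0 ≤ g + d)
        have := mul_nonneg hd (by linarith : 0 ≤ g + d)
        linarith
    _ ≤ #(typicalVertices G A B d) * (lam1 G - g - d) := by gcongr; linarith
    _ ≤ ∑ w ∈ typicalVertices G A B d, lam1 G * x w := by
        rw [← nsmul_eq_mul]
        refine card_nsmul_le_sum _ _ _ fun w hw ↦ ?_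
        linarith [hx.sum_le_lam1_mul_add hAB w, (mem_filter.mp hw).2]
    _ = lam1 G * ∑ w ∈ typicalVertices G A B d, x w := (mul_sum _ _ _).symm

include hB

theorem half_sub_le_lam1_mul (hG : IsSpexWheel (2 * k + 1) G)
    (hn : (2 * k + 1) * (d + 1) < n / 2 - d) (v : Fin n) : (n : ℝ) / 2 - 2 * g ≤ lam1 G * x v := by
  by_cases hv : v ∈ A
  · refine (half_sub_le_sum_typicalVertices_right hx hlam hAB hA hdg hu huA hB).trans ?_
    refine hG.sum_le_lam1_mul_of_card_nonNbrsIn_le (A := A) hx hd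
      (fun q hq ↦ (mem_filter.mp hq).2) ?_ fun hvB ↦ ?_
    · push_cast
      linarith [hA.le_card]
    · exact mem_compl.mp (hAB ▸ typicalVertices_subset hvB) hv
  · refine (half_sub_le_sum_typicalVertices_left hx hlam hAB hA hd hdg hgn hu huA).trans ?_
    refine hG.sum_le_lam1_mul_of_card_nonNbrsIn_le (A := B) hx hd
      (fun q hq ↦ (mem_filter.mp hq).2) ?_ fun hvA ↦ hv (typicalVertices_subset hvA)
    push_cast
    linarith [hB.le_card]

end

theorem half_sub_le_lam1_mul_and_lam1_le (hG : IsSpexWheel (2 * k + 1) G)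
    (hx : IsPerronVector G x) (hlam : (n : ℝ) / 2 ≤ lam1 G) (hA : IsNearlyCompleteSide G A Aᶜ d g)
    (hB : IsNearlyCompleteSide G Aᶜ A d g) (hd : 0 ≤ d) (hdg : 3 * d ≤ g) (hgn : g + d ≤ n / 2)
    (hn : (2 * k + 1) * (d + 1) < n / 2 - d) :
    (∀ v, (n : ℝ) / 2 - 2 * g ≤ lam1 G * x v) ∧ lam1 G ≤ n / 2 + 2 * g := by
  obtain ⟨u, hu⟩ := hx.exists_eq_one
  by_cases huA : u ∈ A
  · exact ⟨half_sub_le_lam1_mul hx hlam rfl hA hB hd hdg hgn hu huA hG hn,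
      lam1_le_half_add hx rfl hA hu huA (by linarith)⟩
  · have huB := mem_compl.mpr huA
    have hAB := (compl_compl A).symm
    exact ⟨half_sub_le_lam1_mul hx hlam hAB hB hA hd hdg hgn hu huB hG hn,
      lam1_le_half_add hx hAB hB hu huB (by linarith)⟩

theorem IsNearlyCompleteSide.card_nonNbrsIn_le (hA : IsNearlyCompleteSide G A B d g)
    (hAB : B = Aᶜ) (hdg : d ≤ g) (hx : IsPerronVector G x) (hv : v ∈ A)
    (hlam : (n : ℝ) / 2 - 2 * g ≤ lam1 G * x v) : (#(nonNbrsIn G B v) : ℝ) ≤ 4 * g := by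
  have hsplit : (#(nbrsIn G B v) : ℝ) + #(nonNbrsIn G B v) = #B := by
    exact_mod_cast card_nbrsIn_add_card_nonNbrsIn G B v
  rw [← hx.sum_nbrsIn_add_sum_nbrsIn_eq hAB] at hlam
  linarith [hA.card_nbrsIn_le v hv, hA.le_card, hx.sum_le_card (A := nbrsIn G A v),
    hx.sum_le_card (A := nbrsIn G B v), card_add_card_eq_of_eq_compl hAB]

theorem exists_nearly_complete_cut {k : ℕ} (hk : 3 ≤ k) {η : ℝ} (hη : 0 < η) (hη1 : η ≤ 1) :
    ∃ N : ℕ, ∀ n ≥ N, ∀ G : SimpleGraph (Fin n), IsSpexWheel (2 * k + 1) G →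
      (n : ℝ) / 2 ≤ lam1 G → ∀ x, IsPerronVector G x →
        (∀ v, 1 - η ≤ x v) ∧ ∃ S : Finset (Fin n),
          (n : ℝ) / 2 - η * n ≤ #S ∧ (n : ℝ) / 2 - η * n ≤ #Sᶜ ∧
          (∀ v ∈ S, (#(nonNbrsIn G Sᶜ v) : ℝ) ≤ η * n) ∧
          ∀ v ∈ Sᶜ, (#(nonNbrsIn G S v) : ℝ) ≤ η * n := by
  have hk0 : (3 : ℝ) ≤ k := by exact_mod_cast hk
  set δ := η / (16 * k)
  have hδ : 0 < δ := by positivity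
  have hδη : 2 * k * δ = η / 8 := by simp only [δ]; field_simp; norm_num
  have h3δ : 3 * δ ≤ η / 8 := by rw [← hδη]; gcongr; linarith
  obtain ⟨N, hN⟩ := exists_isMaxCut_cutCount_ge (by lia : 0 < k) (sq_pos_of_pos hδ)
  refine ⟨N + ⌈1 / δ⌉₊ + 16 * k + 9, fun n hn G hG hlam x hx ↦ ?_⟩
  have hn1 : 1 ≤ δ * n := by
    rw [mul_comm, ← div_le_iff₀ hδ]
    exact (Nat.le_ceil _).trans (by exact_mod_cast by lia)
  have hn2 : 16 * (k : ℝ) + 9 ≤ n := by exact_mod_cast (by lia : 16 * k + 9 ≤ n)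
  have hn0 : (0 : ℝ) < n := by linarith
  have hηn : η * n ≤ n := mul_le_of_le_one_left hn0.le hη1
  have h3δn : 3 * (δ * n) ≤ η / 8 * n := by rw [← mul_assoc]; gcongr
  have hδηn : 2 * k * (δ * n) = η / 8 * n := by rw [← hδη]; ring
  obtain ⟨S, hcut, hsize⟩ := hN n (by lia) G hG.1 hlam
  rw [← mul_pow] at hsize
  have hS := hcut.isNearlyCompleteSide (by lia) hG.1 hn1 hsize
  have hT := hcut.symm.isNearlyCompleteSide (by lia) hG.1 hn1 (by rwa [cutCount_compl])
  rw [hδηn] at hS hT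
  obtain ⟨hxv, hlam'⟩ := half_sub_le_lam1_mul_and_lam1_le hG hx hlam hS hT (by linarith) h3δn
    (by linarith) (by linarith)
  refine ⟨fun v ↦ ?_, S, by linarith [hS.le_card], by linarith [hT.le_card], fun v hv ↦ ?_,
    fun v hv ↦ ?_⟩
  · have hlam0 : 0 < lam1 G := by linarith
    refine le_of_mul_le_mul_left ?_ hlam0
    linarith [hxv v, mul_le_mul_of_nonneg_left hlam hη.le]
  · linarith [hS.card_nonNbrsIn_le rfl (by linarith) hx hv (hxv v)]
  · linarith [hT.card_nonNbrsIn_le (compl_compl S).symm (by linarith) hx hv (hxv v)]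

end NearlyCompleteCut

section StablePartition

open Finset

variable {k n : ℕ} {G : SimpleGraph (Fin n)} {x : Fin n → ℝ} {A B : Finset (Fin n)} {v : Fin n}

/-- One side of the partition that stability provides for an extremal `W_{2k+1}`-free graph: `A` is
almost half of the vertices, induces a graph of maximum degree less than `k`, and each of its
vertices misses at most as many vertices of the other side `B` as it has neighbours in `A`. -/
structure IsStableSide (k : ℕ) (G : SimpleGraph (Fin n)) (A B : Finset (Fin n)) : Prop where
  le_card : (n : ℝ) / 2 - n / 500 ≤ #A
  card_nbrsIn_lt : ∀ v ∈ A, #(nbrsIn G A v) < k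
  card_nonNbrsIn_le : ∀ v ∈ A, #(nonNbrsIn G B v) ≤ #(nbrsIn G A v)

/-- The information on an extremal `W_{2k+1}`-free graph `G` with Perron vector `x` from which its
exact structure is derived: `A`, `B` is a partition with two stable sides, `x` is nearly constant
and `lam1 G` is at least its value for the conjectured extremal graphs. The tolerance `1 / 500` is
only required to be small. -/
structure IsStablePartition (k : ℕ) (G : SimpleGraph (Fin n)) (x : Fin n → ℝ)
    (A B : Finset (Fin n)) : Prop where
  three_le : 3 ≤ k
  le_order : 16 * k ≤ n
  isSpexWheel : IsSpexWheel (2 * k + 1) G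
  isPerronVector : IsPerronVector G x
  half_le_lam1 : (n : ℝ) / 2 ≤ lam1 G
  le_lam1_sq_sub : (n : ℝ) ^ 2 / 4 + 3 / 4 ≤ lam1 G ^ 2 - (k - 1) * lam1 G
  le_apply : ∀ v, 1 - 1 / 500 ≤ x v
  eq_compl : B = Aᶜ
  left : IsStableSide k G A B
  right : IsStableSide k G B A

theorem IsStablePartition.symm (h : IsStablePartition k G x A B) : IsStablePartition k G x B A :=
  { h with eq_compl := by rw [h.eq_compl, compl_compl], left := h.right, right := h.left }

theorem card_nbrsIn_lt_of_card_nonNbrsIn_le {m : ℝ} (hk : 0 < k) (hG : WheelFree (2 * k + 1) G)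
    (hm : ∀ v ∈ A, (#(nonNbrsIn G B v) : ℝ) ≤ m) (hB : k + (k + 1) * m ≤ #B) (hv : v ∈ A) :
    #(nbrsIn G A v) < k := by
  by_contra! hdeg
  obtain ⟨X, hX, hXk⟩ := exists_subset_card_eq hdeg
  have hcommon := card_le_card_commonNbrsIn_add (G := G) (A := B) (Q := insert v X)
    fun q hq ↦ hm q <| (mem_insert.mp hq).elim (fun h ↦ h ▸ hv) fun h ↦ nbrsIn_subset (hX h)
  have hm0 : 0 ≤ m := (Nat.cast_nonneg _).trans (hm v hv)
  have hcard : (#(insert v X) : ℝ) * m ≤ (k + 1) * m := by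
    gcongr
    exact_mod_cast hXk ▸ card_insert_le v X
  obtain ⟨Y, hY, hYk⟩ := exists_subset_card_eq (s := commonNbrsIn G B (insert v X)) (n := k)
    (by exact_mod_cast (by linarith : (k : ℝ) ≤ #(commonNbrsIn G B (insert v X))))
  have hadj (q) (hq : q ∈ insert v X) (b) (hb : b ∈ Y) : G.Adj q b :=
    (mem_commonNbrsIn.mp (hY hb)).2 q hq
  exact hG <| containsCopy_wheelGraph_of_completeBipartite hk hXk hYk
    (fun a ha ↦ hadj a (mem_insert_of_mem ha)) (fun a ha ↦ (mem_nbrsIn.mp (hX ha)).2)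
    (hadj v (mem_insert_self v X))

theorem IsSpexWheel.card_nonNbrsIn_le_card_nbrsIn {t : ℕ} {m η : ℝ} (hG : IsSpexWheel t G)
    (hx : IsPerronVector G x) (hxη : ∀ v, 1 - η ≤ x v) (hAB : B = Aᶜ)
    (hm : ∀ w ∈ B, (#(nonNbrsIn G A w) : ℝ) ≤ m) (hm0 : 0 ≤ m) (hA : t * (m + 1) < #A)
    (hv : v ∈ A) (hη1 : η ≤ 1) (hη : η * (#(nbrsIn G A v) + 1) < 1) :
    #(nonNbrsIn G B v) ≤ #(nbrsIn G A v) := by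
  have hsum := hG.sum_le_lam1_mul_of_card_nonNbrsIn_le hx hm0 hm hA (v := v)
    (by rw [hAB, mem_compl]; exact not_not_intro hv)
  rw [← hx.sum_nbrsIn_add_sum_nbrsIn_eq hAB, ← sum_nbrsIn_add_sum_nonNbrsIn G B v] at hsum
  have hlow := card_nsmul_le_sum (nonNbrsIn G B v) x (1 - η) fun w _ ↦ hxη w
  rw [nsmul_eq_mul] at hlow
  by_contra! hlt
  have hlt' : (#(nbrsIn G A v) + 1 : ℝ) * (1 - η) ≤ #(nonNbrsIn G B v) * (1 - η) := by
    refine mul_le_mul_of_nonneg_right ?_ (by linarith)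
    exact_mod_cast hlt
  linarith [hx.sum_le_card (A := nbrsIn G A v)]

theorem IsSpexWheel.isStableSide {η : ℝ} (hk : 3 ≤ k) (hn : 16 * k ≤ n)
    (hG : IsSpexWheel (2 * k + 1) G) (hx : IsPerronVector G x) (hxη : ∀ v, 1 - η ≤ x v)
    (hη : η = 1 / (100 * (k + 2))) (hAB : B = Aᶜ) (hA : (n : ℝ) / 2 - η * n ≤ #A)
    (hB : (n : ℝ) / 2 - η * n ≤ #B) (hmA : ∀ v ∈ A, (#(nonNbrsIn G B v) : ℝ) ≤ η * n)
    (hmB : ∀ v ∈ B, (#(nonNbrsIn G A v) : ℝ) ≤ η * n) : IsStableSide k G A B := by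
  have hk3 : (3 : ℝ) ≤ k := by exact_mod_cast hk
  have hkn : 16 * (k : ℝ) ≤ n := by exact_mod_cast hn
  have hη0 : 0 < η := by rw [hη]; positivity
  have hηk : k * η = 1 / 100 - 2 * η := by rw [hη]; field_simp; ring
  have h3η : 3 * η ≤ k * η := by gcongr
  have hηn0 : 0 ≤ η * n := by positivity
  have hηn : η * n ≤ 1 / 500 * n := by gcongr; linarith
  have hηkn : k * (η * n) = 1 / 100 * n - 2 * (η * n) := by rw [← mul_assoc, hηk]; ring
  have hdeg (v) (hv : v ∈ A) : #(nbrsIn G A v) < k :=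
    card_nbrsIn_lt_of_card_nonNbrsIn_le (by lia) hG.1 hmA (by linarith) hv
  refine ⟨by linarith, hdeg, fun v hv ↦ ?_⟩
  refine hG.card_nonNbrsIn_le_card_nbrsIn hx hxη hAB hmB hηn0 ?_ hv (by linarith) ?_
  · push_cast
    linarith
  · have : (#(nbrsIn G A v) : ℝ) + 1 ≤ k := by exact_mod_cast hdeg v hv
    linarith [mul_le_mul_of_nonneg_left this hη0.le]

theorem exists_isStablePartition (hk : 3 ≤ k) : ∃ N, ∀ n ≥ N, ∀ G : SimpleGraph (Fin n),
    IsSpexWheel (2 * k + 1) G → ∃ x A B, IsStablePartition k G x A B := by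
  set η : ℝ := 1 / (100 * (k + 2)) with hη
  have hη500 : η ≤ 1 / 500 := by
    have : (3 : ℝ) ≤ k := by exact_mod_cast hk
    rw [hη]
    gcongr
    linarith
  obtain ⟨N₁, hlower⟩ := exists_forall_isSpexWheel_lam1_ge hk
  obtain ⟨N₂, hcut⟩ := exists_nearly_complete_cut hk (by positivity : 0 < η) (by linarith)
  refine ⟨N₁ + N₂ + 16 * k, fun n hn G hG ↦ ?_⟩
  obtain ⟨hlam, hlam2⟩ := hlower n (by lia) G hG
  obtain ⟨x, hx⟩ := exists_isPerronVector (by lia : 0 < n) G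
  obtain ⟨hxη, A, hA, hB, hmA, hmB⟩ := hcut n (by lia) G hG hlam x hx
  exact ⟨x, A, Aᶜ,
    { three_le := hk
      le_order := by lia
      isSpexWheel := hG
      isPerronVector := hx
      half_le_lam1 := hlam
      le_lam1_sq_sub := hlam2
      le_apply := fun v ↦ by linarith [hxη v]
      eq_compl := rfl
      left := hG.isStableSide hk (by lia) hx hxη hη rfl hA hB hmA hmB
      right := hG.isStableSide hk (by lia) hx hxη hη (compl_compl A).symm hB hA hmB hmA }⟩

theorem IsPerronVector.lam1_mul_sum_eq (hx : IsPerronVector G x) (hAB : B = Aᶜ) :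
    lam1 G * ∑ v ∈ A, x v = ∑ v ∈ A, #(nbrsIn G A v) * x v + #A * ∑ v ∈ B, x v -
      ∑ v ∈ B, #(nonNbrsIn G A v) * x v := by
  have hcross : ∑ v ∈ B, (#(nbrsIn G A v) : ℝ) * x v + ∑ v ∈ B, #(nonNbrsIn G A v) * x v =
      #A * ∑ v ∈ B, x v := by
    rw [← sum_add_distrib, mul_sum]
    refine sum_congr rfl fun v _ ↦ ?_
    rw [← add_mul, ← card_nbrsIn_add_card_nonNbrsIn G A v, Nat.cast_add]
  calc lam1 G * ∑ v ∈ A, x v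
      = ∑ v ∈ A, (∑ w ∈ nbrsIn G A v, x w + ∑ w ∈ nbrsIn G B v, x w) := by
        simp only [hx.sum_nbrsIn_add_sum_nbrsIn_eq hAB, mul_sum]
    _ = ∑ v ∈ A, #(nbrsIn G A v) * x v + ∑ v ∈ B, #(nbrsIn G A v) * x v := by
        rw [sum_add_distrib, sum_sum_nbrsIn, sum_sum_nbrsIn]
    _ = _ := by linarith

section

variable (h : IsStablePartition k G x A B)

include h

theorem IsStablePartition.mul_card_le_sum : (1 - 1 / 500) * (#A : ℝ) ≤ ∑ v ∈ A, x v := by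
  rw [mul_comm, ← nsmul_eq_mul]
  exact card_nsmul_le_sum A x _ fun v _ ↦ h.le_apply v

theorem IsStablePartition.quarter_le_sum : (n : ℝ) / 4 ≤ ∑ v ∈ A, x v := by
  linarith [h.mul_card_le_sum, h.left.le_card, (Nat.cast_nonneg n : (0 : ℝ) ≤ n)]

theorem IsStablePartition.order_pos : (0 : ℝ) < n := by
  have := h.three_le
  have := h.le_order
  exact_mod_cast (by lia : 0 < n)

theorem IsStablePartition.le_lam1 : (k : ℝ) ≤ lam1 G := by
  have : 16 * (k : ℝ) ≤ n := by exact_mod_cast h.le_order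
  linarith [h.half_le_lam1, (Nat.cast_nonneg k : (0 : ℝ) ≤ k)]

theorem IsStablePartition.sub_mul_sum_le {p : ℝ}
    (hp : ∑ v ∈ A, #(nbrsIn G A v) * x v ≤ p * ∑ v ∈ A, x v) :
    (lam1 G - p) * ∑ v ∈ A, x v ≤ #A * ∑ v ∈ B, x v := by
  have hmiss : 0 ≤ ∑ v ∈ B, #(nonNbrsIn G A v) * x v :=
    sum_nonneg fun v _ ↦ mul_nonneg (Nat.cast_nonneg _) (h.isPerronVector.nonneg v)
  linarith [h.isPerronVector.lam1_mul_sum_eq h.eq_compl]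

/-- Multiplying the averaged eigenvalue equations of the two sides would give
`(λ - p) (λ - q) ≤ #A * #B ≤ n ^ 2 / 4`. -/
theorem IsStablePartition.lt_add_of_weighted_degree_le {p q : ℝ} (hp : 0 ≤ p) (hq : 0 ≤ q)
    (hA : ∑ v ∈ A, #(nbrsIn G A v) * x v ≤ p * ∑ v ∈ A, x v)
    (hB : ∑ v ∈ B, #(nbrsIn G B v) * x v ≤ q * ∑ v ∈ B, x v) : k - 1 < p + q := by
  by_contra! hpq
  have hn := h.order_pos
  have hlam := h.le_lam1
  have hA0 : 0 < ∑ v ∈ A, x v := by linarith [h.quarter_le_sum]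
  have hB0 : 0 < ∑ v ∈ B, x v := by linarith [h.symm.quarter_le_sum]
  have hprod : ((lam1 G - p) * (lam1 G - q)) * ((∑ v ∈ A, x v) * ∑ v ∈ B, x v) ≤
      (#A * #B) * ((∑ v ∈ A, x v) * ∑ v ∈ B, x v) := by
    calc _ = ((lam1 G - p) * ∑ v ∈ A, x v) * ((lam1 G - q) * ∑ v ∈ B, x v) := by ring
      _ ≤ (#A * ∑ v ∈ B, x v) * (#B * ∑ v ∈ A, x v) :=
          mul_le_mul (h.sub_mul_sum_le hA) (h.symm.sub_mul_sum_le hB)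
            (mul_nonneg (by linarith) hB0.le) (by positivity)
      _ = _ := by ring
  have hcancel := le_of_mul_le_mul_right hprod (mul_pos hA0 hB0)
  have hcard : (#A : ℝ) * #B ≤ n ^ 2 / 4 := by
    rw [← card_add_card_eq_of_eq_compl h.eq_compl]
    linarith [sq_nonneg ((#A : ℝ) - #B)]
  have hpqlam : (p + q) * lam1 G ≤ (k - 1) * lam1 G :=
    mul_le_mul_of_nonneg_right hpq (by linarith)
  linarith [h.le_lam1_sq_sub, mul_nonneg hp hq]

theorem IsStablePartition.sum_card_nbrsIn_mul_le {p : ℝ} (hp : p ≤ k - 1) :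
    ∑ v ∈ A, #(nbrsIn G A v) * x v ≤
      p * ∑ v ∈ A, x v + #{v ∈ A | p < #(nbrsIn G A v)} * (k - 1 - p) := by
  have hle (v) (hv : v ∈ A) : (#(nbrsIn G A v) : ℝ) * x v ≤
      p * x v + if p < #(nbrsIn G A v) then k - 1 - p else 0 := by
    have hx0 := h.isPerronVector.nonneg v
    split_ifs with hdeg
    · have hlt : (#(nbrsIn G A v) : ℝ) + 1 ≤ k := by exact_mod_cast h.left.card_nbrsIn_lt v hv
      have hx1 := mul_le_of_le_one_right (sub_nonneg.mpr hp) (h.isPerronVector.le_one v)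
      linarith [mul_le_mul_of_nonneg_right hlt hx0]
    · linarith [mul_le_mul_of_nonneg_right (not_lt.mp hdeg) hx0]
  refine (sum_le_sum hle).trans_eq ?_
  rw [sum_add_distrib, ← mul_sum, ← sum_filter, sum_const, nsmul_eq_mul]

end

end StablePartition

section PathRich

open Finset

/-- `A` contains a path on `l` vertices avoiding any prescribed set of at most `C` vertices, so that
paths with few vertices in total can be chosen disjointly in `A`. -/
def IsPathRich {V : Type*} (G : SimpleGraph V) (A : Finset V) (C l : ℕ) : Prop :=
  ∀ Z : Finset V, #Z ≤ C → ∃ p : List V, p.length = l ∧ p.Nodup ∧ p.IsChain G.Adj ∧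
    ∀ v ∈ p, v ∈ A ∧ v ∉ Z

section

variable {V : Type*} {G : SimpleGraph V} {A B Z : Finset V} {C k : ℕ}

theorem exists_disjoint_paths (ls : List ℕ) (hrich : ∀ l ∈ ls, IsPathRich G A C l)
    (hC : #Z + ls.sum ≤ C) :
    ∃ P : List (List V), P.map List.length = ls ∧ P.flatten.Nodup ∧
      (∀ p ∈ P, p.IsChain G.Adj) ∧ ∀ v ∈ P.flatten, v ∈ A ∧ v ∉ Z := by
  classical
  induction ls with
  | nil => exact ⟨[], by simp⟩
  | cons l ls ih =>
    rw [List.sum_cons] at hC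
    rw [List.forall_mem_cons] at hrich
    obtain ⟨P, hPlen, hPnd, hPchain, hPA⟩ := ih hrich.2 (by lia)
    have hflat : P.flatten.length = ls.sum := by rw [List.length_flatten, hPlen]
    obtain ⟨p, hplen, hpnd, hpchain, hpA⟩ := hrich.1 (Z ∪ P.flatten.toFinset) <| by
      have := card_union_le Z P.flatten.toFinset
      have := List.toFinset_card_le P.flatten
      lia
    simp only [mem_union, List.mem_toFinset, not_or] at hpA
    refine ⟨p :: P, by rw [List.map_cons, hplen, hPlen], ?_, ?_, ?_⟩
    · rw [List.flatten_cons]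
      exact hpnd.append hPnd fun v hv ↦ (hpA v hv).2.2
    · exact List.forall_mem_cons.mpr ⟨hpchain, hPchain⟩
    · rw [List.flatten_cons, List.forall_mem_append]
      exact ⟨fun v hv ↦ ⟨(hpA v hv).1, (hpA v hv).2.1⟩, hPA⟩

theorem isPathRich_one (hC : C < #A) : IsPathRich G A C 1 := by
  intro Z hZ
  obtain ⟨v, hv, hvZ⟩ := exists_mem_notMem_of_card_lt_card (hZ.trans_lt hC)
  exact ⟨[v], by simp [hv, hvZ]⟩

theorem card_biUnion_insert_nbrsIn_le [DecidableEq V] (hd : ∀ v ∈ B, #(nbrsIn G A v) < k) :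
    #(B.biUnion fun v ↦ insert v (nbrsIn G A v)) ≤ #B * k :=
  card_biUnion_le_card_mul _ _ _ fun v hv ↦ (card_insert_le _ _).trans (hd v hv)

theorem sum_card_nbrsIn_le_of_not_isPathRich_two (hd : ∀ v ∈ A, #(nbrsIn G A v) < k)
    (hrich : ¬ IsPathRich G A C 2) : ∑ v ∈ A, #(nbrsIn G A v) ≤ 2 * (C * k) := by
  classical
  simp only [IsPathRich, not_forall] at hrich
  obtain ⟨Z, hZ, hrich⟩ := hrich
  have hsum : ∑ v ∈ A ∩ Z, #(nbrsIn G A v) ≤ C * k := by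
    refine (sum_le_card_nsmul _ _ k fun v hv ↦ (hd v (mem_inter.mp hv).1).le).trans ?_
    exact Nat.mul_le_mul_right k ((card_le_card inter_subset_right).trans hZ)
  have hcover (a) (ha : a ∈ A \ Z) : nbrsIn G A a ⊆ nbrsIn G (A ∩ Z) a := by
    intro b hb
    rw [mem_nbrsIn] at hb ⊢
    rw [mem_sdiff] at ha
    refine ⟨mem_inter.mpr ⟨hb.1, by_contra fun hbZ ↦ hrich ⟨[a, b], rfl, ?_, ?_, ?_⟩⟩, hb.2⟩
    · simp [hb.2.ne]
    · simp [hb.2]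
    · simp [ha, hb.1, hbZ]
  calc ∑ v ∈ A, #(nbrsIn G A v)
      = ∑ v ∈ A ∩ Z, #(nbrsIn G A v) + ∑ v ∈ A \ Z, #(nbrsIn G A v) :=
        (sum_inter_add_sum_sdiff A Z _).symm
    _ ≤ C * k + ∑ v ∈ A, #(nbrsIn G (A ∩ Z) v) := by
        gcongr
        exact (sum_le_sum fun a ha ↦ card_le_card (hcover a ha)).trans
          (sum_le_sum_of_subset sdiff_subset)
    _ ≤ 2 * (C * k) := by
        rw [sum_card_nbrsIn_comm, two_mul]
        gcongr

theorem card_filter_two_le_of_not_isPathRich_three (hd : ∀ v ∈ A, #(nbrsIn G A v) < k)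
    (hrich : ¬ IsPathRich G A C 3) : #{v ∈ A | 2 ≤ #(nbrsIn G A v)} ≤ C * k := by
  classical
  simp only [IsPathRich, not_forall] at hrich
  obtain ⟨Z, hZ, hrich⟩ := hrich
  have hsub : {v ∈ A | 2 ≤ #(nbrsIn G A v)} ⊆
      (A ∩ Z).biUnion fun z ↦ insert z (nbrsIn G A z) := by
    intro v hv
    obtain ⟨hvA, hdeg⟩ := mem_filter.mp hv
    obtain ⟨a, ha, b, hb, hab⟩ := one_lt_card.mp hdeg
    rw [mem_nbrsIn] at ha hb
    by_contra hout
    simp only [mem_biUnion, mem_inter, mem_insert, mem_nbrsIn, not_exists, not_and, not_or,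
      and_imp] at hout
    refine hrich ⟨[a, v, b], rfl, ?_, ?_, ?_⟩
    · simp [hab, ha.2.ne', hb.2.ne]
    · simp [ha.2.symm, hb.2]
    · simp only [List.forall_mem_cons, List.not_mem_nil, false_imp_iff, forall_true_iff, and_true]
      exact ⟨⟨ha.1, fun h ↦ (hout a ha.1 h).2 hvA ha.2.symm⟩,
        ⟨hvA, fun h ↦ (hout v hvA h).1 rfl⟩, hb.1, fun h ↦ (hout b hb.1 h).2 hvA hb.2.symm⟩
  calc _ ≤ _ := card_le_card hsub
    _ ≤ #(A ∩ Z) * k := card_biUnion_insert_nbrsIn_le fun v hv ↦ hd v (mem_inter.mp hv).1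
    _ ≤ C * k := Nat.mul_le_mul_right k ((card_le_card inter_subset_right).trans hZ)

end

section

variable {k n C : ℕ} {G : SimpleGraph (Fin n)} {x : Fin n → ℝ} {A B : Finset (Fin n)} {w : Fin n}
  (hC : k * k + 2 * k ≤ C)

include hC

/-- A wheel with hub `w` whose rim alternates between the neighbours of `w` in `A` and disjoint
paths in the common neighbourhood of these vertices and `w` in `B`. -/
theorem IsStableSide.containsCopy_wheelGraph (hk : 0 < k) (hA : IsStableSide k G A B) (hw : w ∈ A)
    {ls : List ℕ} (hlen : ls.length = #(nbrsIn G A w)) (hsum : ls.sum + ls.length = 2 * k)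
    (hls : ∀ l ∈ ls, l ≠ 0 ∧ IsPathRich G B C l) : ContainsCopy (wheelGraph (2 * k + 1)) G := by
  set W := insert w (nbrsIn G A w)
  have hWA : ∀ z ∈ W, z ∈ A := forall_mem_insert _ _ _ |>.mpr ⟨hw, fun z hz ↦ nbrsIn_subset hz⟩
  have hW : #W ≤ k := (card_insert_le _ _).trans (hA.card_nbrsIn_lt w hw)
  have hmiss : #(W.biUnion (nonNbrsIn G B)) ≤ k * k :=
    (card_biUnion_le_card_mul W _ k fun z hz ↦ (hA.card_nonNbrsIn_le z (hWA z hz)).trans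
      (hA.card_nbrsIn_lt z (hWA z hz)).le).trans (Nat.mul_le_mul_right k hW)
  obtain ⟨P, hPlen, hPnd, hPchain, hPB⟩ :=
    exists_disjoint_paths (Z := W.biUnion (nonNbrsIn G B)) ls (fun l hl ↦ (hls l hl).2) (by lia)
  have hadj (z) (hz : z ∈ W) (y) (hy : y ∈ P.flatten) : G.Adj z y := by
    by_contra hzy
    exact (hPB y hy).2 (mem_biUnion.mpr ⟨z, hz, mem_nonNbrsIn.mpr ⟨(hPB y hy).1, hzy⟩⟩)
  refine containsCopy_wheelGraph_of_paths (w := w) (X := (nbrsIn G A w).toList) (P := P) (by lia)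
    ?_ ?_ (nodup_toList _) hPnd (fun p hp ↦ ⟨hPchain p hp, ?_⟩)
    (fun z hz ↦ hadj z (mem_insert_of_mem (mem_toList.mp hz)))
    (fun z hz ↦ (mem_nbrsIn.mp (mem_toList.mp hz)).2) (hadj w (mem_insert_self _ _))
  · rw [length_toList, ← hlen, ← hPlen, List.length_map]
  · rw [List.length_flatten, hPlen, length_toList]
    lia
  · rintro rfl
    exact (hls 0 (hPlen ▸ List.mem_map_of_mem hp)).1 rfl

variable (h : IsStablePartition k G x A B) (hCn : 8 * C ≤ n)

include h hCn

theorem IsStablePartition.mul_add_two_mul_card_nbrsIn_ne {l q : ℕ}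
    (hrich : IsPathRich G B C (l + 1)) (hw : w ∈ A) (hq : q ≤ #(nbrsIn G A w)) :
    q * l + 2 * #(nbrsIn G A w) ≠ 2 * k := by
  intro hsum
  have hk := h.three_le
  have hone : IsPathRich G B C 1 := by
    refine isPathRich_one ?_
    have : 8 * (C : ℝ) ≤ n := by exact_mod_cast hCn
    exact_mod_cast (by linarith [h.right.le_card, h.order_pos] : (C : ℝ) < #B)
  refine h.isSpexWheel.1 <| h.left.containsCopy_wheelGraph hC (by lia) hw
    (ls := .replicate q (l + 1) ++ .replicate (#(nbrsIn G A w) - q) 1) ?_ ?_ ?_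
  · simp only [List.length_append, List.length_replicate]
    lia
  · simp only [List.sum_append_nat, List.sum_replicate_nat, List.length_append,
      List.length_replicate, mul_add]
    lia
  · simp only [List.mem_append, List.mem_replicate]
    rintro _ (⟨-, rfl⟩ | ⟨-, rfl⟩)
    exacts [⟨by lia, hrich⟩, ⟨by lia, hone⟩]

theorem IsStablePartition.three_mul_card_nbrsIn_lt (hrich : IsPathRich G B C 2) (hw : w ∈ A) :
    3 * #(nbrsIn G A w) < 2 * k := by
  have hlt := h.left.card_nbrsIn_lt w hw
  by_contra! hle
  exact h.mul_add_two_mul_card_nbrsIn_ne hC hCn (q := 2 * k - 2 * #(nbrsIn G A w)) hrich hw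
    (by lia) (by lia)

theorem IsStablePartition.two_mul_card_nbrsIn_lt_of_isPathRich_three
    (hrich : IsPathRich G B C 3) (hw : w ∈ A) : 2 * #(nbrsIn G A w) < k := by
  have hlt := h.left.card_nbrsIn_lt w hw
  by_contra! hle
  exact h.mul_add_two_mul_card_nbrsIn_ne hC hCn (q := k - #(nbrsIn G A w)) hrich hw
    (by lia) (by lia)

end

section

variable {k n C : ℕ} {G : SimpleGraph (Fin n)} {x : Fin n → ℝ} {A B : Finset (Fin n)} {w : Fin n}
  (h : IsStablePartition k G x A B)

include h

theorem IsStablePartition.sum_card_nbrsIn_mul_le_of_le {p : ℝ}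
    (hp : ∀ v ∈ A, (#(nbrsIn G A v) : ℝ) ≤ p) :
    ∑ v ∈ A, #(nbrsIn G A v) * x v ≤ p * ∑ v ∈ A, x v := by
  rw [mul_sum]
  exact sum_le_sum fun v hv ↦ mul_le_mul_of_nonneg_right (hp v hv) (h.isPerronVector.nonneg v)

theorem IsStablePartition.sum_card_nbrsIn_mul_le_two_mul (hrich : ¬ IsPathRich G A C 3)
    (hn : 4 * (C * k * k) ≤ n) :
    ∑ v ∈ A, #(nbrsIn G A v) * x v ≤ 2 * ∑ v ∈ A, x v := by
  have hk : (3 : ℝ) ≤ k := by exact_mod_cast h.three_le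
  have hfew : (#{v ∈ A | (1 : ℝ) < #(nbrsIn G A v)} : ℝ) ≤ C * k := by
    simp only [Nat.one_lt_cast]
    exact_mod_cast card_filter_two_le_of_not_isPathRich_three h.left.card_nbrsIn_lt hrich
  have hn' : 4 * ((C : ℝ) * k * k) ≤ n := by exact_mod_cast hn
  have hextra := mul_le_mul hfew (by linarith : (k : ℝ) - 1 - 1 ≤ k) (by linarith) (by positivity)
  linarith [h.sum_card_nbrsIn_mul_le (p := 1) (by linarith), h.quarter_le_sum]

variable (hC : k * k + 2 * k ≤ C) (hCn : 8 * C ≤ n) (hCkn : 4 * (C * k * k) ≤ n)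

include hC hCn hCkn

/-- If `B` has few paths on three vertices, then the weighted average degree is at most `2` in `B`
and at most `k - 3` in `A`; this is where `k = 4` and `k = 5` have to be excluded. -/
theorem IsStablePartition.two_mul_card_nbrsIn_lt (hk4 : k ≠ 4) (hk5 : k ≠ 5)
    (hrich : IsPathRich G B C 2) (hw : w ∈ A) : 2 * #(nbrsIn G A w) < k := by
  by_cases hrich3 : IsPathRich G B C 3
  · exact h.two_mul_card_nbrsIn_lt_of_isPathRich_three hC hCn hrich3 hw
  by_contra! hle
  have hdeg {v} (hv : v ∈ A) := h.three_mul_card_nbrsIn_lt hC hCn hrich hv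
  have hk6 : 6 ≤ k := by
    have := h.three_le
    have := hdeg hw
    lia
  have hk6' : (6 : ℝ) ≤ k := by exact_mod_cast hk6
  have := h.lt_add_of_weighted_degree_le (p := k - 3) (by linarith) zero_le_two
    (h.sum_card_nbrsIn_mul_le_of_le fun v hv ↦ ?_)
    (h.symm.sum_card_nbrsIn_mul_le_two_mul hrich3 hCkn)
  · linarith
  · have := hdeg hv
    rw [le_sub_iff_add_le]
    exact_mod_cast (by lia : #(nbrsIn G A v) + 3 ≤ k)

theorem IsStablePartition.exists_side_not_isPathRich_two (hk4 : k ≠ 4) (hk5 : k ≠ 5) :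
    ¬ IsPathRich G A C 2 ∨ ¬ IsPathRich G B C 2 := by
  by_contra! hrich
  have hk : (3 : ℝ) ≤ k := by exact_mod_cast h.three_le
  have hhalf {A B : Finset (Fin n)} (h : IsStablePartition k G x A B)
      (hrich : IsPathRich G B C 2) :
      ∑ v ∈ A, #(nbrsIn G A v) * x v ≤ ((k : ℝ) - 1) / 2 * ∑ v ∈ A, x v := by
    refine h.sum_card_nbrsIn_mul_le_of_le fun v hv ↦ ?_
    have hdeg := h.two_mul_card_nbrsIn_lt hC hCn hCkn hk4 hk5 hrich hv
    have : 2 * (#(nbrsIn G A v) : ℝ) + 1 ≤ k := by exact_mod_cast hdeg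
    linarith
  linarith [h.lt_add_of_weighted_degree_le (by linarith) (by linarith) (hhalf h hrich.2)
    (hhalf h.symm hrich.1)]

end

end PathRich

section Hub

open Finset

/-- A vertex `w` with `k - 1` neighbours in `A` such that `w` and these neighbours are adjacent to
all of `B`, the natural hub of a wheel on `2 * k + 1` vertices. -/
structure IsHub {V : Type*} (k : ℕ) (G : SimpleGraph V) (A B : Finset V) (w : V) : Prop where
  card_nbrsIn : #(nbrsIn G A w) + 1 = k
  adj : ∀ y ∈ B, G.Adj w y
  adj_of_mem_nbrsIn : ∀ z ∈ nbrsIn G A w, ∀ y ∈ B, G.Adj z y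

section

variable {V : Type*} {k : ℕ} {G : SimpleGraph V} {A B : Finset V} {a b c d w : V}
  (hw : IsHub k G A B w) (hB : 2 * k + 1 ≤ #B)

include hw hB

theorem IsHub.containsCopy_wheelGraph {P : List (List V)} {j : ℕ} (hk : 0 < k)
    (hlen : P.length + j + 1 = k) (hflat : P.flatten.length + j = k + 1) (hnd : P.flatten.Nodup)
    (hchain : ∀ p ∈ P, p.IsChain G.Adj ∧ p ≠ []) (hPB : ∀ y ∈ P.flatten, y ∈ B) :
    ContainsCopy (wheelGraph (2 * k + 1)) G := by
  classical
  have hcard : j ≤ #(B \ P.flatten.toFinset) := by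
    have := List.toFinset_card_le P.flatten
    have := le_card_sdiff P.flatten.toFinset B
    lia
  obtain ⟨J, hJ, hJj⟩ := exists_subset_card_eq hcard
  have hJflat : (J.toList.map ([·])).flatten = J.toList := by
    rw [← List.flatMap_def, List.flatMap_singleton']
  have hPJ : (P ++ J.toList.map ([·])).flatten = P.flatten ++ J.toList := by
    rw [List.flatten_append, hJflat]
  have hmem : ∀ y ∈ (P ++ J.toList.map ([·])).flatten, y ∈ B := by
    rw [hPJ, List.forall_mem_append]
    exact ⟨hPB, fun y hy ↦ (mem_sdiff.mp (hJ (mem_toList.mp hy))).1⟩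
  have hX : #(nbrsIn G A w) + 1 = k := hw.card_nbrsIn
  refine containsCopy_wheelGraph_of_paths (w := w) (X := (nbrsIn G A w).toList) (by lia) ?_ ?_
    (nodup_toList _) ?_ ?_
    (fun z hz y hy ↦ hw.adj_of_mem_nbrsIn z (mem_toList.mp hz) y (hmem y hy))
    (fun z hz ↦ (mem_nbrsIn.mp (mem_toList.mp hz)).2)
    fun y hy ↦ hw.adj y (hmem y hy)
  · simp only [length_toList, List.length_append, List.length_map]
    lia
  · rw [hPJ, List.length_append, length_toList, length_toList]
    lia
  · rw [hPJ]
    refine hnd.append (nodup_toList _) fun y hyP hyJ ↦ ?_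
    exact (mem_sdiff.mp (hJ (mem_toList.mp hyJ))).2 (List.mem_toFinset.mpr hyP)
  · rw [List.forall_mem_append]
    exact ⟨hchain, by simp⟩

variable (hk : 3 ≤ k) (hfree : ¬ ContainsCopy (wheelGraph (2 * k + 1)) G)

include hk hfree

theorem IsHub.eq_of_adj_of_adj (ha : a ∈ B) (hb : b ∈ B) (hc : c ∈ B) (hab : G.Adj a b)
    (hbc : G.Adj b c) : a = c := by
  by_contra hac
  refine hfree <| hw.containsCopy_wheelGraph hB (P := [[a, b, c]]) (j := k - 2) (by lia)
    (by simp only [List.length_singleton]; lia) ?_ ?_ ?_ ?_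
  · simp only [List.flatten_singleton, List.length_cons, List.length_nil]
    lia
  · simp [hab.ne, hbc.ne, hac]
  · simp [hab, hbc]
  · simp [ha, hb, hc]

theorem IsHub.sym2_eq_of_adj (ha : a ∈ B) (hb : b ∈ B) (hab : G.Adj a b) (hc : c ∈ B) (hd : d ∈ B)
    (hcd : G.Adj c d) : s(c, d) = s(a, b) := by
  have hpath {a b c} := hw.eq_of_adj_of_adj hB hk hfree (a := a) (b := b) (c := c)
  rw [Sym2.eq_iff]
  by_cases hca : c = a
  · exact .inl ⟨hca, hpath hd hc hb hcd.symm (hca ▸ hab)⟩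
  by_cases hcb : c = b
  · exact .inr ⟨hcb, hpath hd hc ha hcd.symm (hcb ▸ hab.symm)⟩
  have hda : d ≠ a := fun h ↦ hcb (hpath hc hd hb hcd (h ▸ hab))
  have hdb : d ≠ b := fun h ↦ hca (hpath hc hd ha hcd (h ▸ hab.symm))
  refine (hfree <| hw.containsCopy_wheelGraph hB (P := [[a, b], [c, d]]) (j := k - 3) (by lia)
    ?_ ?_ ?_ ?_ ?_).elim
  · simp only [List.length_cons, List.length_nil]
    lia
  · simp only [List.flatten_cons, List.flatten_nil, List.length_append, List.length_cons,
      List.length_nil]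
    lia
  · simp [hab.ne, hcd.ne, Ne.symm hca, Ne.symm hcb, hda.symm, hdb.symm]
  · simp [hab, hcd]
  · simp [ha, hb, hc, hd]

theorem IsHub.sum_card_nbrsIn_le_two : ∑ v ∈ B, #(nbrsIn G B v) ≤ 2 := by
  classical
  rw [← card_sigma]
  by_contra! hcard
  obtain ⟨⟨a, b⟩, hab⟩ := card_pos.mp (zero_lt_two.trans hcard)
  have hsub : B.sigma (nbrsIn G B) ⊆ {⟨a, b⟩, ⟨b, a⟩} := by
    rintro ⟨c, d⟩ hcd
    simp only [mem_sigma, mem_nbrsIn] at hab hcd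
    have := hw.sym2_eq_of_adj hB hk hfree hab.1 hab.2.1 hab.2.2 hcd.1 hcd.2.1 hcd.2.2
    simpa [Sym2.eq_iff] using this
  exact hcard.not_ge ((card_le_card hsub).trans card_le_two)

end

section

variable {k n K : ℕ} {G : SimpleGraph (Fin n)} {x : Fin n → ℝ} {A B : Finset (Fin n)}
  (h : IsStablePartition k G x A B) (hK : ∑ v ∈ B, #(nbrsIn G B v) ≤ K)

include h hK

theorem IsStablePartition.lt_card_filter_card_nbrsIn_add_one_eq (hn : 8 * (K * k) ≤ n) :
    K * k < #{v ∈ A | #(nbrsIn G A v) + 1 = k} := by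
  by_contra! hfew
  have hk : (3 : ℝ) ≤ k := by exact_mod_cast h.three_le
  have hfilter : {v ∈ A | (k : ℝ) - 2 < #(nbrsIn G A v)} = {v ∈ A | #(nbrsIn G A v) + 1 = k} := by
    refine filter_congr fun v hv ↦ ?_
    have := h.left.card_nbrsIn_lt v hv
    rw [sub_lt_iff_lt_add]
    norm_cast
    lia
  have hn' : 8 * ((K : ℝ) * k) ≤ n := by exact_mod_cast hn
  have hfew' : (#{v ∈ A | #(nbrsIn G A v) + 1 = k} : ℝ) ≤ K * k := by exact_mod_cast hfew
  have hKk : (K : ℝ) ≤ K * k := le_mul_of_one_le_right K.cast_nonneg (by linarith)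
  have hA := h.sum_card_nbrsIn_mul_le (p := k - 2) (by linarith)
  have hB : ∑ v ∈ B, #(nbrsIn G B v) * x v ≤ K :=
    (sum_le_sum fun v _ ↦ mul_le_of_le_one_right (Nat.cast_nonneg _)
      (h.isPerronVector.le_one v)).trans (by exact_mod_cast hK)
  rw [hfilter] at hA
  have := h.lt_add_of_weighted_degree_le (p := k - 3 / 2) (q := 1 / 2) (by linarith) (by norm_num)
    (by linarith [h.quarter_le_sum]) (by linarith [h.symm.quarter_le_sum])
  linarith

theorem IsStablePartition.card_filter_nonNbrsIn_nonempty_le :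
    #{v ∈ A | (nonNbrsIn G B v).Nonempty} ≤ K :=
  calc #{v ∈ A | (nonNbrsIn G B v).Nonempty}
      ≤ ∑ v ∈ A with (nonNbrsIn G B v).Nonempty, #(nonNbrsIn G B v) := by
        rw [card_eq_sum_ones]
        exact sum_le_sum fun v hv ↦ card_pos.mpr (mem_filter.mp hv).2
    _ ≤ ∑ v ∈ A, #(nonNbrsIn G B v) := sum_le_sum_of_subset (filter_subset _ _)
    _ = ∑ v ∈ B, #(nonNbrsIn G A v) := sum_card_nonNbrsIn_comm G A B
    _ ≤ ∑ v ∈ B, #(nbrsIn G B v) := sum_le_sum h.right.card_nonNbrsIn_le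
    _ ≤ K := hK

theorem IsStablePartition.exists_isHub (hn : 8 * (K * k) ≤ n) : ∃ w, IsHub k G A B w := by
  set D : Finset (Fin n) := {v ∈ A | (nonNbrsIn G B v).Nonempty}
  have hD : #(D.biUnion fun v ↦ insert v (nbrsIn G A v)) ≤ K * k :=
    (card_biUnion_insert_nbrsIn_le fun v hv ↦ h.left.card_nbrsIn_lt v (mem_filter.mp hv).1).trans
      (Nat.mul_le_mul_right k (h.card_filter_nonNbrsIn_nonempty_le hK))
  obtain ⟨w, hwF, hwD⟩ := exists_mem_notMem_of_card_lt_card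
    (hD.trans_lt (h.lt_card_filter_card_nbrsIn_add_one_eq hK hn))
  obtain ⟨hwA, hdeg⟩ := mem_filter.mp hwF
  have hfull : ∀ z ∈ A, w ∈ insert z (nbrsIn G A z) → ∀ y ∈ B, G.Adj z y := by
    intro z hz hwz y hy
    by_contra hzy
    exact hwD <| mem_biUnion.mpr ⟨z, mem_filter.mpr ⟨hz, y, mem_nonNbrsIn.mpr ⟨hy, hzy⟩⟩, hwz⟩
  refine ⟨w, hdeg, hfull w hwA (mem_insert_self _ _), fun z hz ↦ ?_⟩
  rw [mem_nbrsIn] at hz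
  exact hfull z hz.1 (mem_insert_of_mem (mem_nbrsIn.mpr ⟨hwA, hz.2.symm⟩))

end

end Hub

section Balance

open Finset

variable {k n : ℕ} {G : SimpleGraph (Fin n)} {x : Fin n → ℝ} {A B : Finset (Fin n)}

theorem IsPerronVector.lam1_sq_sub_mul_sum_eq (hx : IsPerronVector G x) (hAB : B = Aᶜ) (p : ℝ) :
    (lam1 G ^ 2 - p * lam1 G - #A * #B) * ∑ v ∈ A, x v =
      #A * (∑ v ∈ B, #(nbrsIn G B v) * x v - ∑ v ∈ A, #(nonNbrsIn G B v) * x v) -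
        lam1 G * (∑ v ∈ A, (p - #(nbrsIn G A v)) * x v + ∑ v ∈ B, #(nonNbrsIn G A v) * x v) := by
  have hA := hx.lam1_mul_sum_eq hAB
  have hB := hx.lam1_mul_sum_eq (by rw [hAB, compl_compl] : A = Bᶜ)
  simp only [sub_mul, sum_sub_distrib, ← mul_sum]
  linear_combination lam1 G * hA + #A * hB

section

variable (h : IsStablePartition k G x A B)

include h

theorem IsStablePartition.mul_sum_le_sum_mul (S : Finset (Fin n)) (f : Fin n → ℕ) :
    (1 - 1 / 500) * (∑ v ∈ S, f v : ℕ) ≤ ∑ v ∈ S, (f v : ℝ) * x v := by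
  rw [Nat.cast_sum, mul_sum]
  refine sum_le_sum fun v _ ↦ ?_
  rw [mul_comm]
  exact mul_le_mul_of_nonneg_left (h.le_apply v) (Nat.cast_nonneg _)

theorem IsStablePartition.mul_card_le_lam1 : (1 - 1 / 250) * (#A : ℝ) ≤ lam1 G := by
  linarith [h.half_le_lam1, h.right.le_card, card_add_card_eq_of_eq_compl h.eq_compl, h.order_pos]

theorem IsStablePartition.mul_card_le_lam1_sq_sub_mul_sum :
    (3 / 4 + ((#A : ℝ) - n / 2) ^ 2) * ((1 - 1 / 500) * #A) ≤
      (lam1 G ^ 2 - (k - 1) * lam1 G - #A * #B) * ∑ v ∈ A, x v := by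
  have hsurplus : 3 / 4 + ((#A : ℝ) - n / 2) ^ 2 ≤
      lam1 G ^ 2 - (k - 1) * lam1 G - #A * #B := by
    have hB : (#B : ℝ) = n - #A := by linarith [card_add_card_eq_of_eq_compl h.eq_compl]
    rw [hB]
    linarith [h.le_lam1_sq_sub]
  exact mul_le_mul hsurplus h.mul_card_le_sum (by positivity) (le_trans (by positivity) hsurplus)

theorem IsStablePartition.mul_card_le_lam1_mul_sum :
    (1 - 1 / 250) * #A * ((1 - 1 / 500) * ((∑ v ∈ A, (k - 1 - #(nbrsIn G A v)) : ℕ) +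
        (∑ v ∈ A, #(nonNbrsIn G B v) : ℕ))) ≤
      lam1 G * (∑ v ∈ A, ((k : ℝ) - 1 - #(nbrsIn G A v)) * x v +
        ∑ v ∈ B, #(nonNbrsIn G A v) * x v) := by
  have hdeficit : ∑ v ∈ A, ((k : ℝ) - 1 - #(nbrsIn G A v)) * x v =
      ∑ v ∈ A, ((k - 1 - #(nbrsIn G A v) : ℕ) : ℝ) * x v := by
    refine sum_congr rfl fun v hv ↦ ?_
    have := h.left.card_nbrsIn_lt v hv
    rw [Nat.cast_sub (by lia), Nat.cast_pred (by lia)]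
  rw [hdeficit, mul_add (1 - 1 / 500), sum_card_nonNbrsIn_comm]
  have hA : (0 : ℝ) ≤ (1 - 1 / 250) * #A := by positivity
  exact mul_le_mul h.mul_card_le_lam1 (add_le_add (h.mul_sum_le_sum_mul _ _)
    (h.mul_sum_le_sum_mul _ _)) (by positivity) (hA.trans h.mul_card_le_lam1)

/-- The surplus of `lam1 G`, the imbalance of the partition, the missing edges between the two sides
and the degrees lacking in `A` must all be paid for by the edges inside `B`. -/
theorem IsStablePartition.imbalance_le :
    99 / 100 * (3 / 4 + ((#A : ℝ) - n / 2) ^ 2 + 2 * (∑ v ∈ A, #(nonNbrsIn G B v) : ℕ) +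
      (∑ v ∈ A, (k - 1 - #(nbrsIn G A v)) : ℕ)) ≤ ∑ v ∈ B, #(nbrsIn G B v) * x v := by
  have hA : (0 : ℝ) < #A := by linarith [h.left.le_card, h.order_pos]
  have hidentity := h.isPerronVector.lam1_sq_sub_mul_sum_eq h.eq_compl (k - 1)
  have hsurplus := h.mul_card_le_lam1_sq_sub_mul_sum
  have hloss := h.mul_card_le_lam1_mul_sum
  have hmiss := mul_le_mul_of_nonneg_left
    (h.mul_sum_le_sum_mul A fun v ↦ #(nonNbrsIn G B v)) hA.le
  generalize (∑ v ∈ A, #(nonNbrsIn G B v) : ℕ) = m at *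
  generalize (∑ v ∈ A, (k - 1 - #(nbrsIn G A v)) : ℕ) = f at *
  refine le_of_mul_le_mul_left ?_ hA
  linarith [mul_nonneg hA.le (sq_nonneg ((#A : ℝ) - n / 2)), mul_nonneg hA.le m.cast_nonneg,
    mul_nonneg hA.le f.cast_nonneg]

end
end Balance

section Extremal

open Finset

theorem containsCopy_wheelGraph_of_pathGraph {V : Type*} {G : SimpleGraph V} {L : Set V} {m : ℕ}
    {a b : V} (hm : 0 < m) (hab : G.Adj a b) (ha : ∀ y ∈ L, G.Adj a y) (hb : ∀ y ∈ L, G.Adj b y)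
    (hP : ContainsCopy (SimpleGraph.pathGraph m) (G.induce L)) :
    ContainsCopy (wheelGraph (m + 2)) G := by
  obtain ⟨f, hf⟩ := hP
  have hL : ∀ y ∈ List.ofFn fun i ↦ (f i : V), y ∈ L := by simp [List.mem_ofFn]
  have hne : (List.ofFn fun i ↦ (f i : V)) ≠ [] := by simpa using hm.ne'
  refine containsCopy_wheelGraph_of_list (w := a) (l := b :: List.ofFn fun i ↦ (f i : V))
    m.succ_pos (by simp) ?_ ?_ ?_ ?_
  · rw [List.nodup_cons, List.nodup_ofFn]
    exact ⟨fun h ↦ G.irrefl (hb b (hL b h)), Subtype.val_injective.comp f.injective⟩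
  · rw [List.isChain_cons, List.isChain_iff_getElem]
    refine ⟨fun y hy ↦ hb y (hL y (List.mem_of_mem_head? hy)), fun i hi ↦ ?_⟩
    simp only [List.getElem_ofFn]
    exact hf _ _ (SimpleGraph.pathGraph_adj.mpr (.inl rfl))
  · intro y hy z hz
    rw [List.getLast?_cons_of_ne_nil hne] at hy
    obtain rfl : b = z := by simpa using hz
    exact (hb y (hL y (List.mem_of_getLast? hy))).symm
  · exact List.forall_mem_cons.mpr ⟨hab, fun y hy ↦ ha y (hL y hy)⟩

theorem edgeCount_induce_eq_one {V : Type*} {G : SimpleGraph V} {R : Set V} [Fintype R] {a b : V}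
    (ha : a ∈ R) (hb : b ∈ R) (hab : G.Adj a b)
    (huniq : ∀ c ∈ R, ∀ d ∈ R, G.Adj c d → s(c, d) = s(a, b)) : edgeCount (G.induce R) = 1 := by
  classical
  refine card_eq_one.mpr ⟨s(⟨a, ha⟩, ⟨b, hb⟩), ?_⟩
  ext e
  induction e with
  | _ c d =>
    rw [SimpleGraph.mem_edgeFinset, SimpleGraph.mem_edgeSet, mem_singleton,
      ← (Sym2.map.injective Subtype.val_injective).eq_iff]
    exact ⟨huniq c c.2 d d.2, fun h ↦ (G.adj_congr_of_sym2 h).mpr hab⟩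

theorem forall_eq_or_exists_of_sum_tsub_le_one {ι : Type*} {A : Finset ι} {d : ι → ℕ} {p : ℕ}
    (hd : ∀ v ∈ A, d v ≤ p) (hsum : ∑ v ∈ A, (p - d v) ≤ 1) :
    (∀ v ∈ A, d v = p) ∨ ∃ w ∈ A, d w = p - 1 ∧ ∀ v ∈ A, v ≠ w → d v = p := by
  classical
  by_contra! ⟨⟨w, hw, hwd⟩, hne⟩
  have hwd' := hd w hw
  have hsplit := add_sum_erase A (fun v ↦ p - d v) hw
  obtain ⟨v, hv, hvw, hvd⟩ := hne w hw (by lia)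
  have := single_le_sum_of_canonicallyOrdered (f := fun v ↦ p - d v) (mem_erase.mpr ⟨hvw, hv⟩)
  have := hd v hv
  lia

section

variable {k n : ℕ} {G : SimpleGraph (Fin n)} {x : Fin n → ℝ} {A B : Finset (Fin n)}
  (h : IsStablePartition k G x A B)

include h

theorem IsStablePartition.exists_adj : ∃ a ∈ B, ∃ b ∈ B, G.Adj a b := by
  by_contra! hB
  have hzero : ∑ v ∈ B, (#(nbrsIn G B v) : ℝ) * x v = 0 := by
    refine sum_eq_zero fun v hv ↦ ?_
    have hempty : nbrsIn G B v = ∅ := eq_empty_of_forall_notMem fun w hw ↦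
      hB v hv w (nbrsIn_subset hw) (mem_nbrsIn.mp hw).2
    rw [hempty, card_empty, Nat.cast_zero, zero_mul]
  have := h.imbalance_le
  rw [hzero] at this
  exact this.not_gt (by positivity)

theorem IsStablePartition.two_mul_add_one_le_card : 2 * k + 1 ≤ #B := by
  have hB := h.right.le_card
  have hn : 16 * (k : ℝ) ≤ n := by exact_mod_cast h.le_order
  have hk : (3 : ℝ) ≤ k := by exact_mod_cast h.three_le
  have : 2 * (k : ℝ) + 1 ≤ #B := by linarith
  exact_mod_cast this

variable (htwo : ∑ v ∈ B, #(nbrsIn G B v) ≤ 2)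

include htwo

theorem IsStablePartition.imbalance_le_two :
    99 / 100 * (3 / 4 + ((#A : ℝ) - n / 2) ^ 2 + 2 * (∑ v ∈ A, #(nonNbrsIn G B v) : ℕ) +
      (∑ v ∈ A, (k - 1 - #(nbrsIn G A v)) : ℕ)) ≤ 2 :=
  calc _ ≤ ∑ v ∈ B, #(nbrsIn G B v) * x v := h.imbalance_le
    _ ≤ ∑ v ∈ B, (#(nbrsIn G B v) : ℝ) := sum_le_sum fun v _ ↦
      mul_le_of_le_one_right (Nat.cast_nonneg _) (h.isPerronVector.le_one v)
    _ ≤ 2 := by exact_mod_cast htwo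

theorem IsStablePartition.defect_le_one :
    2 * ∑ v ∈ A, #(nonNbrsIn G B v) + ∑ v ∈ A, (k - 1 - #(nbrsIn G A v)) ≤ 1 := by
  have := h.imbalance_le_two htwo
  generalize ∑ v ∈ A, #(nonNbrsIn G B v) = m at *
  generalize ∑ v ∈ A, (k - 1 - #(nbrsIn G A v)) = f at *
  by_contra! hlt
  have hlt' : (2 : ℝ) ≤ 2 * m + f := by exact_mod_cast hlt
  linarith [sq_nonneg ((#A : ℝ) - n / 2)]

theorem IsStablePartition.adj_of_mem {u v : Fin n} (hu : u ∈ A) (hv : v ∈ B) : G.Adj u v := by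
  have hzero : ∑ v ∈ A, #(nonNbrsIn G B v) = 0 := by
    have := h.defect_le_one htwo
    lia
  exact adj_of_nonNbrsIn_eq_empty (card_eq_zero.mp (sum_eq_zero_iff.mp hzero u hu)) hv

theorem IsStablePartition.card_nbrsIn_eq_or_exists :
    (∀ v ∈ A, #(nbrsIn G A v) = k - 1) ∨
      ∃ w ∈ A, #(nbrsIn G A w) = k - 2 ∧ ∀ v ∈ A, v ≠ w → #(nbrsIn G A v) = k - 1 :=
  forall_eq_or_exists_of_sum_tsub_le_one (fun v hv ↦ Nat.le_sub_one_of_lt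
    (h.left.card_nbrsIn_lt v hv)) (by have := h.defect_le_one htwo; lia)

theorem IsStablePartition.abs_card_sub_le_one : |(#A : ℝ) - n / 2| ≤ 1 := by
  have hsq : (2 * (#A : ℝ) - n) ^ 2 < 3 ^ 2 := by
    have := h.imbalance_le_two htwo
    have := (∑ v ∈ A, #(nonNbrsIn G B v)).cast_nonneg (α := ℝ)
    have := (∑ v ∈ A, (k - 1 - #(nbrsIn G A v))).cast_nonneg (α := ℝ)
    linarith
  have hlt : |2 * (#A : ℤ) - n| < 3 := abs_lt_of_sq_lt_sq (by exact_mod_cast hsq) (by norm_num)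
  have hle : |2 * (#A : ℤ) - n| ≤ 2 := Int.lt_add_one_iff.mp hlt
  have hle : |2 * (#A : ℝ) - n| ≤ 2 := by exact_mod_cast hle
  rw [abs_le] at hle ⊢
  constructor <;> linarith

end

end Extremal

/-- Structure of spectral extremal `W_{2k+1}`-free graphs for
`k ≥ 3`, `k ∉ {4,5}`. -/
theorem spex_structure_odd_wheel (k : ℕ) (hk : 3 ≤ k) (hk4 : k ≠ 4) (hk5 : k ≠ 5) :
    ∃ N : ℕ, ∀ n : ℕ, N ≤ n → ∀ G : SimpleGraph (Fin n),
      IsSpexWheel (2 * k + 1) G →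
      ∃ (L R : Finset (Fin n)) (s : ℝ),
        R = Lᶜ ∧
        (L.card : ℝ) = (n : ℝ) / 2 + s ∧ (R.card : ℝ) = (n : ℝ) / 2 - s ∧ |s| ≤ 1 ∧
        (∀ u ∈ L, ∀ v ∈ R, G.Adj u v) ∧
        ((∀ v ∈ L, degIn G L v = k - 1) ∨
          ∃ w ∈ L, degIn G L w = k - 2 ∧ ∀ v ∈ L, v ≠ w → degIn G L v = k - 1) ∧
        ¬ ContainsCopy (SimpleGraph.pathGraph (2 * k - 1)) (G.induce (L : Set (Fin n))) ∧
        edgeCount (G.induce (R : Set (Fin n))) = 1 := by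
  obtain ⟨N, hN⟩ := exists_isStablePartition hk
  set C := k * k + 2 * k with hC
  set K := 2 * (C * k)
  refine ⟨N + (8 * C + 4 * (C * k * k) + 8 * (K * k)), fun n hn G hG ↦ ?_⟩
  obtain ⟨x, A, B, h, hrich⟩ : ∃ x A B, IsStablePartition k G x A B ∧ ¬IsPathRich G B C 2 := by
    obtain ⟨x, A, B, h⟩ := hN n (by lia) G hG
    exact (h.exists_side_not_isPathRich_two hC.ge (by lia) (by lia) hk4 hk5).elim
      (fun hA ↦ ⟨x, B, A, h.symm, hA⟩) fun hB ↦ ⟨x, A, B, h, hB⟩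
  have hsum := sum_card_nbrsIn_le_of_not_isPathRich_two h.right.card_nbrsIn_lt hrich
  obtain ⟨w, hw⟩ := h.exists_isHub hsum (by lia)
  have hcard := h.two_mul_add_one_le_card
  have htwo := hw.sum_card_nbrsIn_le_two hcard hk hG.1
  obtain ⟨a, ha, b, hb, hab⟩ := h.exists_adj
  have hadj (u) (hu : u ∈ A) (v) (hv : v ∈ B) : G.Adj u v := h.adj_of_mem htwo hu hv
  refine ⟨A, B, A.card - n / 2, h.eq_compl, by ring, ?_, h.abs_card_sub_le_one htwo,
    hadj, ?_, fun hP ↦ hG.1 ?_, edgeCount_induce_eq_one ha hb hab fun c hc d hd ↦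
      hw.sym2_eq_of_adj hcard hk hG.1 ha hb hab hc hd⟩
  · linarith [card_add_card_eq_of_eq_compl h.eq_compl]
  · exact h.card_nbrsIn_eq_or_exists htwo
  · have := containsCopy_wheelGraph_of_pathGraph (by lia) hab (fun y hy ↦ (hadj y hy a ha).symm)
      (fun y hy ↦ (hadj y hy b hb).symm) hP
    rwa [show 2 * k + 1 = 2 * k - 1 + 2 by lia]
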